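/- arXiv:2007.10989 — 5 statements merged into one kernel-verified Lean document; each statement's English description precedes it below -/
import Mathlib

section
/- Let (A_i, φ_i) for i in an index set I be a family of non-commutative probability spaces. Then there exists a non-commutative probability space (A, φ) together with injective unital ℂ-algebra homomorphisms ι_i : A_i → A for each i ∈ I such that φ ∘ ι_i = φ_i for every i ∈ I, and the images ι_i(A_i), i ∈ I, are freely independent in (A, φ) in the moment sense. -/
open scoped BigOperators ComplexOrder

/-- Free independence, in the moment sense, of a family of subsets `S i` of `A`:
`φ(a_1 ⋯ a_k) = 0` whenever `a_j ∈ S (idx j)`, each `φ(a_j) = 0`, and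
consecutive indices differ. -/
def FreeIndepMoment {A : Type*} [Ring A] [Algebra ℂ A] {ι : Type*}
    (φ : A →ₗ[ℂ] ℂ) (S : ι → Set A) : Prop :=
  ∀ (k : ℕ), 0 < k → ∀ (a : Fin k → A) (idx : Fin k → ι),
    (∀ j, a j ∈ S (idx j)) → (∀ j, φ (a j) = 0) →
    (∀ j j' : Fin k, (j : ℕ) + 1 = (j' : ℕ) → idx j ≠ idx j') →
    φ (List.ofFn a).prod = 0

/-- A basis of `A` containing `1`, the other elements being centred, indexed by a monoid
whose unit indexes `1`. -/
theorem exists_good_basis {A : Type v} [Ring A] [Algebra ℂ A] (φ : A →ₗ[ℂ] ℂ) (hφ : φ 1 = 1) :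
    ∃ (K : Type v) (_ : Monoid K) (b : Module.Basis K ℂ A), b 1 = 1 ∧ ∀ k, k ≠ 1 → φ (b k) = 0 := by
  let c := Module.Basis.ofVectorSpace ℂ (LinearMap.ker φ)
  let J := Module.Basis.ofVectorSpaceIndex ℂ (LinearMap.ker φ)
  let f : Option J → A := fun o => o.elim 1 (fun j => (c j : A))
  have hspan : Submodule.span ℂ (Set.range (fun j => (c j : A))) = LinearMap.ker φ := by
    have : Set.range (fun j => (c j : A)) = (LinearMap.ker φ).subtype '' Set.range c := by
      rw [← Set.range_comp]; rfl
    rw [this, Submodule.span_image, c.span_eq, Submodule.map_top, Submodule.range_subtype]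
  have hli : LinearIndependent ℂ f := by
    rw [linearIndependent_option]
    refine ⟨c.linearIndependent.map' (LinearMap.ker φ).subtype (Submodule.ker_subtype _), ?_⟩
    change (1 : A) ∉ Submodule.span ℂ (Set.range (fun j => (c j : A)))
    rw [hspan, LinearMap.mem_ker, hφ]
    exact one_ne_zero
  have hsp : ⊤ ≤ Submodule.span ℂ (Set.range f) := by
    intro x _
    have h1 : (1 : A) ∈ Submodule.span ℂ (Set.range f) := Submodule.subset_span ⟨none, rfl⟩
    have h2 : x - φ x • (1 : A) ∈ Submodule.span ℂ (Set.range f) := by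
      have : x - φ x • (1 : A) ∈ Submodule.span ℂ (Set.range (fun j => (c j : A))) := by
        rw [hspan, LinearMap.mem_ker]; simp [hφ]
      refine Submodule.span_mono ?_ this
      rintro _ ⟨j, rfl⟩
      exact ⟨some j, rfl⟩
    have := add_mem h2 (Submodule.smul_mem _ (φ x) h1)
    simpa using this
  let m : Monoid (Option J) :=
    { mul := fun a b => a.elim b some
      one := none
      mul_assoc := by rintro (_ | a) b d <;> rfl
      one_mul := fun a => rfl
      mul_one := by rintro (_ | a) <;> rfl }
  refine ⟨Option J, m, Module.Basis.mk hli hsp, ?_, ?_⟩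
  · rw [Module.Basis.mk_apply]; rfl
  · rintro (_ | k) hk
    · exact (hk rfl).elim
    · rw [Module.Basis.mk_apply]; exact (c k).2

section FreeProductConstruction

open Monoid.CoprodI Classical

variable {I : Type u} {A : I → Type v} [∀ i, Ring (A i)] [∀ i, Algebra ℂ (A i)]
  {K : I → Type v} [∀ i, Monoid (K i)] (b : ∀ i, Module.Basis (K i) ℂ (A i))

/-- Put an element of `A i` in front of a word not starting with `i`. -/
noncomputable def fpCons (i : I) (t : Word K) (ht : t.fstIdx ≠ some i) :
    A i →ₗ[ℂ] (Word K →₀ ℂ) :=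
  (Finsupp.lmapDomain ℂ ℂ (fun k : K i => Word.rcons ⟨k, t, ht⟩)) ∘ₗ (b i).repr.toLinearMap

theorem fpCons_basis (i : I) (t : Word K) (ht : t.fstIdx ≠ some i) (k : K i) :
    fpCons b i t ht (b i k) = Finsupp.single (Word.rcons ⟨k, t, ht⟩) 1 := by
  simp [fpCons, Finsupp.mapDomain_single]

/-- The left action of `A i` on the Fock-type space of words. -/
noncomputable def fpAct (i : I) (a : A i) : (Word K →₀ ℂ) →ₗ[ℂ] (Word K →₀ ℂ) :=
  Finsupp.linearCombination ℂ (fun w => fpCons b i (Word.equivPair i w).tail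
    (Word.equivPair i w).fstIdx_ne (a * b i (Word.equivPair i w).head))

theorem fpAct_single (i : I) (a : A i) (w : Word K) :
    fpAct b i a (Finsupp.single w 1) = fpCons b i (Word.equivPair i w).tail
    (Word.equivPair i w).fstIdx_ne (a * b i (Word.equivPair i w).head) := by
  simp [fpAct]

theorem fpAct_cons (i : I) (a x : A i) (t : Word K) (ht : t.fstIdx ≠ some i) :
    fpAct b i a (fpCons b i t ht x) = fpCons b i t ht (a * x) := by
  suffices h : fpAct b i a ∘ₗ fpCons b i t ht = fpCons b i t ht ∘ₗ LinearMap.mulLeft ℂ a from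
    LinearMap.congr_fun h x
  refine (b i).ext fun k => ?_
  have hp : Word.equivPair i (Word.rcons ⟨k, t, ht⟩) = ⟨k, t, ht⟩ :=
    (Word.equivPair i).apply_symm_apply ⟨k, t, ht⟩
  simp only [LinearMap.comp_apply, fpCons_basis, fpAct_single, LinearMap.mulLeft_apply]
  simp only [hp]

/-- The action as an algebra homomorphism. -/
noncomputable def fpHom (i : I) : A i →ₐ[ℂ] Module.End ℂ (Word K →₀ ℂ) :=
  AlgHom.ofLinearMap
    { toFun := fpAct b i
      map_add' := fun x y => by
        refine Finsupp.lhom_ext' fun w => LinearMap.ext_ring ?_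
        simp [fpAct_single, add_mul]
      map_smul' := fun c x => by
        refine Finsupp.lhom_ext' fun w => LinearMap.ext_ring ?_
        simp [fpAct_single] }
    (by
      refine Finsupp.lhom_ext' fun w => LinearMap.ext_ring ?_
      have hp : Word.rcons (Word.equivPair i w) = w := (Word.equivPair i).symm_apply_apply w
      simp only [LinearMap.coe_mk, AddHom.coe_mk, LinearMap.comp_apply, Finsupp.lsingle_apply,
        fpAct_single, one_mul, fpCons_basis, Module.End.one_apply]
      exact congrArg (fun w => Finsupp.single w (1 : ℂ)) hp)
    (fun x y => by
      refine Finsupp.lhom_ext' fun w => LinearMap.ext_ring ?_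
      simp only [LinearMap.coe_mk, AddHom.coe_mk, LinearMap.comp_apply, Finsupp.lsingle_apply,
        fpAct_single, Module.End.mul_apply, fpAct_cons, mul_assoc])

theorem fpHom_apply (i : I) (a : A i) : fpHom b i a = fpAct b i a := rfl

theorem fpHom_of_ne (hb : ∀ i, b i 1 = 1) (i : I) (a : A i) (w : Word K)
    (hw : w.fstIdx ≠ some i) :
    fpHom b i a (Finsupp.single w 1) = fpCons b i w hw a := by
  rw [fpHom_apply, fpAct_single]
  simp only [Word.equivPair_eq_of_fstIdx_ne hw, hb, mul_one]

theorem fp_rcons_fstIdx (i : I) (k : K i) (t : Word K) (ht : t.fstIdx ≠ some i) (hk : k ≠ 1) :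
    (Word.rcons ⟨k, t, ht⟩).fstIdx = some i := by
  simp [Word.rcons, hk, Word.cons, Word.fstIdx]

/-- The vacuum state. -/
noncomputable def fpState (K : I → Type v) [∀ i, Monoid (K i)] :
    Module.End ℂ (Word K →₀ ℂ) →ₗ[ℂ] ℂ :=
  Finsupp.lapply Word.empty ∘ₗ LinearMap.applyₗ (Finsupp.single Word.empty 1)

theorem fpState_apply (T : Module.End ℂ (Word K →₀ ℂ)) :
    fpState K T = T (Finsupp.single Word.empty 1) Word.empty := rfl

theorem fp_empty_ne (i : I) : (Word.empty : Word K).fstIdx ≠ some i := by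
  simp [Word.fstIdx, Word.empty]

theorem fpState_hom (φ : ∀ i, A i →ₗ[ℂ] ℂ) (hφ : ∀ i, φ i 1 = 1) (hb : ∀ i, b i 1 = 1)
    (hb0 : ∀ i k, k ≠ 1 → φ i (b i k) = 0) (i : I) (a : A i) :
    fpState K (fpHom b i a) = φ i a := by
  suffices h : fpState K ∘ₗ (fpHom b i).toLinearMap = φ i from LinearMap.congr_fun h a
  refine (b i).ext fun k => ?_
  change fpState K (fpHom b i (b i k)) = _
  rw [fpState_apply, fpHom_of_ne b hb i _ _ (fp_empty_ne i), fpCons_basis]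
  by_cases hk : k = 1
  · subst hk
    rw [hb, hφ]
    simp [Word.rcons]
  · rw [hb0 i k hk, Finsupp.single_apply, if_neg]
    intro h
    have := fp_rcons_fstIdx i k _ (fp_empty_ne i) hk
    rw [h] at this
    exact fp_empty_ne i this

theorem fpHom_injective (hb : ∀ i, b i 1 = 1) (i : I) : Function.Injective (fpHom b i) := by
  intro x y h
  have h1 := LinearMap.congr_fun h (Finsupp.single Word.empty 1)
  rw [fpHom_of_ne b hb i _ _ (fp_empty_ne i), fpHom_of_ne b hb i _ _ (fp_empty_ne i)] at h1
  refine (b i).repr.injective (Finsupp.mapDomain_injective ?_ h1)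
  intro k k' hk
  have := Word.rcons_inj hk
  simpa using this

theorem fpHom_mem (φ : ∀ i, A i →ₗ[ℂ] ℂ) (hφ : ∀ i, φ i 1 = 1) (hb : ∀ i, b i 1 = 1)
    (hb0 : ∀ i k, k ≠ 1 → φ i (b i k) = 0) (i : I) (a : A i) (ha : φ i a = 0)
    (v : Word K →₀ ℂ) (hv : v ∈ Finsupp.supported ℂ ℂ {w : Word K | w.fstIdx ≠ some i}) :
    fpHom b i a v ∈ Finsupp.supported ℂ ℂ {w : Word K | w.fstIdx = some i} := by
  rw [Finsupp.supported_eq_span_single] at hv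
  induction hv using Submodule.span_induction with
  | zero => simp
  | add x y _ _ hx hy => rw [map_add]; exact add_mem hx hy
  | smul c x _ hx => rw [map_smul]; exact Submodule.smul_mem _ _ hx
  | mem x hx =>
    obtain ⟨w, hw, rfl⟩ := hx
    rw [fpHom_of_ne b hb i a w hw]
    -- the coefficient of `a` at `1` is `φ a = 0`
    have hcoef : (b i).repr a 1 = 0 := by
      rw [← ha]
      suffices h : (b i).coord 1 = φ i from LinearMap.congr_fun h a
      refine (b i).ext fun k => ?_
      by_cases hk : k = 1
      · subst hk; rw [hb, hφ, ← hb i]; simp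
      · rw [hb0 i k hk]; simp [hk]
    intro u hu
    have hu' := Finsupp.mapDomain_support hu
    obtain ⟨k, hk, rfl⟩ := Finset.mem_image.1 hu'
    refine fp_rcons_fstIdx i k w hw ?_
    rintro rfl
    exact (Finsupp.mem_support_iff.1 hk) hcoef

theorem fp_prod_mem (φ : ∀ i, A i →ₗ[ℂ] ℂ) (hφ : ∀ i, φ i 1 = 1) (hb : ∀ i, b i 1 = 1)
    (hb0 : ∀ i k, k ≠ 1 → φ i (b i k) = 0) (n : ℕ) :
    ∀ (a : Fin (n + 1) → Module.End ℂ (Word K →₀ ℂ)) (idx : Fin (n + 1) → I),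
    (∀ j, a j ∈ Set.range (fpHom b (idx j))) → (∀ j, fpState K (a j) = 0) →
    (∀ j j' : Fin (n + 1), (j : ℕ) + 1 = (j' : ℕ) → idx j ≠ idx j') →
    (List.ofFn a).prod (Finsupp.single Word.empty 1) ∈
      Finsupp.supported ℂ ℂ {w : Word K | w.fstIdx = some (idx 0)} := by
  induction n with
  | zero =>
    intro a idx ha h0 _
    obtain ⟨x, hx⟩ := ha 0
    have hx0 := h0 0
    rw [← hx, fpState_hom b φ hφ hb hb0] at hx0
    simp only [List.ofFn_succ, List.ofFn_zero, List.prod_cons, List.prod_nil, mul_one]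
    rw [← hx]
    exact fpHom_mem b φ hφ hb hb0 _ x hx0 _ (Finsupp.single_mem_supported ℂ _ (fp_empty_ne _))
  | succ n ih =>
    intro a idx ha h0 hne
    obtain ⟨x, hx⟩ := ha 0
    have hx0 := h0 0
    rw [← hx, fpState_hom b φ hφ hb hb0] at hx0
    rw [List.ofFn_succ, List.prod_cons, Module.End.mul_apply, ← hx]
    refine fpHom_mem b φ hφ hb hb0 _ x hx0 _ ?_
    refine Finsupp.supported_mono ?_ (ih (fun j => a j.succ) (fun j => idx j.succ)
      (fun j => ha _) (fun j => h0 _) (fun j j' h => hne _ _ (by simp [h])))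
    intro w hw
    simp only [Set.mem_ofPred_eq] at hw ⊢
    rw [hw]
    intro h
    exact hne 0 (Fin.succ 0) (by simp) (Option.some.inj h).symm

end FreeProductConstruction

/-- **Free product of non-commutative probability spaces.**
Given a family of non-commutative probability spaces `(A i, φ i)`, there exists a
non-commutative probability space `(B, ψ)` together with injective unital ℂ-algebra
homomorphisms `ι i : A i →ₐ[ℂ] B` such that `ψ ∘ ι i = φ i` for every `i`, and the
images `ι i '' (A i)` are freely independent in `(B, ψ)` in the moment sense. -/
theorem free_product_of_ncp_exists {I : Type u} (A : I → Type v)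
    [∀ i, Ring (A i)] [∀ i, Algebra ℂ (A i)]
    (φ : ∀ i, A i →ₗ[ℂ] ℂ) (hφ : ∀ i, φ i 1 = 1) :
    ∃ (B : Type (max u v)) (_ : Ring B) (_ : Algebra ℂ B) (ψ : B →ₗ[ℂ] ℂ)
      (ι : ∀ i, A i →ₐ[ℂ] B),
      ψ 1 = 1 ∧
      (∀ i, Function.Injective (ι i)) ∧
      (∀ i a, ψ (ι i a) = φ i a) ∧
      FreeIndepMoment ψ (fun i => Set.range (ι i)) := by
  classical
  choose K m b hb hb0 using fun i => exists_good_basis (φ i) (hφ i)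
  refine ⟨Module.End ℂ (Monoid.CoprodI.Word K →₀ ℂ), inferInstance, inferInstance, fpState K,
    fpHom b, ?_, fpHom_injective b hb, fpState_hom b φ hφ hb hb0, ?_⟩
  · simp [fpState_apply]
  · intro k hk a idx ha h0 hne
    obtain ⟨n, rfl⟩ : ∃ n, k = n + 1 := ⟨k - 1, by omega⟩
    have h := fp_prod_mem b φ hφ hb hb0 n a idx ha h0 hne
    rw [fpState_apply]
    by_contra hcon
    exact fp_empty_ne _ (h (Finsupp.mem_support_iff.2 hcon))
end

section
/- Let (A_i, φ_i) for i in an index set I be a family of *-probability spaces. Then there exists a *-probability space (A, φ) together with injective unital *-algebra homomorphisms ι_i : A_i → A for each i ∈ I such that φ ∘ ι_i = φ_i for every i ∈ I, and the images ι_i(A_i), i ∈ I, are freely independent in (A, φ) in the moment sense. -/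
open scoped BigOperators ComplexOrder

namespace FreeProdAux

universe u v

theorem exists_univ {I : Type u} (A : I → Type v) [∀ i, Ring (A i)] [∀ i, Algebra ℂ (A i)] :
    ∃ (P : Type (max u v)) (_ : Ring P) (_ : Algebra ℂ P) (ι : ∀ i, A i →ₐ[ℂ] P),
      (∀ (B : Type (max u v)) [Ring B] [Algebra ℂ B] (f : ∀ i, A i →ₐ[ℂ] B),
        ∃ g : P →ₐ[ℂ] B, ∀ i a, g (ι i a) = f i a) ∧
      Algebra.adjoin ℂ (⋃ i, Set.range (ι i)) = ⊤ := by
  classical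
  refine ⟨LinearAlgebra.FreeProduct ℂ A, inferInstance, inferInstance,
    fun i => LinearAlgebra.FreeProduct.ι ℂ A i, ?_, ?_⟩
  · intro B _ _ f
    refine ⟨LinearAlgebra.FreeProduct.lift ℂ A (fun {i} => f i), fun i a => ?_⟩
    have := LinearAlgebra.FreeProduct.lift_comp_ι (i := i) ℂ A (fun {i} => f i)
    exact DFunLike.congr_fun this a
  · set S := Algebra.adjoin ℂ (⋃ i, Set.range (LinearAlgebra.FreeProduct.ι ℂ A i)) with hS
    have hmem : ∀ i a, LinearAlgebra.FreeProduct.ι ℂ A i a ∈ S := fun i a =>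
      Algebra.subset_adjoin (Set.mem_iUnion.2 ⟨i, a, rfl⟩)
    let g : ∀ i, A i →ₐ[ℂ] S := fun i =>
      (LinearAlgebra.FreeProduct.ι ℂ A i).codRestrict S (hmem i)
    let G := LinearAlgebra.FreeProduct.lift ℂ A (fun {i} => g i)
    have h1 : S.val.comp G = AlgHom.id ℂ _ := by
      apply (LinearAlgebra.FreeProduct.lift ℂ A).symm.injective
      funext i
      ext a
      have := LinearAlgebra.FreeProduct.lift_comp_ι (i := i) ℂ A (fun {i} => g i)
      have := DFunLike.congr_fun this a
      change ((G (LinearAlgebra.FreeProduct.ι ℂ A i a) : S) : LinearAlgebra.FreeProduct ℂ A) = _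
      have h2 : G (LinearAlgebra.FreeProduct.ι ℂ A i a) = g i a := this
      rw [h2]; rfl
    rw [eq_top_iff]
    intro x _
    have := DFunLike.congr_fun h1 x
    have h3 : ((G x : S) : LinearAlgebra.FreeProduct ℂ A) = x := this
    rw [← h3]; exact (G x).2

/-- The opposite ring, with the conjugate complex algebra structure. -/
def Tw (P : Type*) := Pᵐᵒᵖ

instance (P : Type*) [Ring P] : Ring (Tw P) := inferInstanceAs (Ring Pᵐᵒᵖ)

noncomputable instance (P : Type*) [Ring P] [Algebra ℂ P] : Algebra ℂ (Tw P) :=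
  RingHom.toAlgebra' ((algebraMap ℂ Pᵐᵒᵖ : ℂ →+* Pᵐᵒᵖ).comp (starRingEnd ℂ))
    (fun c x => Algebra.commutes (A := Pᵐᵒᵖ) (starRingEnd ℂ c) x)

theorem exists_star {I : Type u} (A : I → Type v) [∀ i, Ring (A i)] [∀ i, Algebra ℂ (A i)]
    [∀ i, StarRing (A i)] [∀ i, StarModule ℂ (A i)]
    (P : Type (max u v)) [Ring P] [Algebra ℂ P] (ι : ∀ i, A i →ₐ[ℂ] P)
    (hlift : ∀ (B : Type (max u v)) [Ring B] [Algebra ℂ B] (f : ∀ i, A i →ₐ[ℂ] B),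
        ∃ g : P →ₐ[ℂ] B, ∀ i a, g (ι i a) = f i a)
    (hgen : Algebra.adjoin ℂ (⋃ i, Set.range (ι i)) = ⊤) :
    ∃ (_ : StarRing P) (_ : StarModule ℂ P), ∀ i a, star (ι i a) = ι i (star a) := by
  let f : ∀ i, A i →ₐ[ℂ] Tw P := fun i =>
    { toFun := fun a => (MulOpposite.op (ι i (star a)) : Pᵐᵒᵖ)
      map_one' := by simp; rfl
      map_mul' := fun a b => by simp; rfl
      map_zero' := by simp; rfl
      map_add' := fun a b => by simp; rfl
      commutes' := fun c => by
        rw [← algebraMap_star_comm, AlgHom.commutes]; rfl }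
  obtain ⟨g, hg⟩ := hlift (Tw P) f
  let s : P → P := fun x => MulOpposite.unop (g x : Pᵐᵒᵖ)
  have s_ι : ∀ i a, s (ι i a) = ι i (star a) := fun i a => by
    simp only [s, hg]; rfl
  have s_mul : ∀ x y, s (x * y) = s y * s x := fun x y => by
    simp only [s, map_mul]; rfl
  have s_add : ∀ x y, s (x + y) = s x + s y := fun x y => by
    simp only [s, map_add]; rfl
  have s_alg : ∀ c : ℂ, s (algebraMap ℂ P c) = algebraMap ℂ P (star c) := fun c => by
    simp only [s, AlgHom.commutes]; rfl
  have s_inv : ∀ x, s (s x) = x := by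
    intro x
    have hx : x ∈ Algebra.adjoin ℂ (⋃ i, Set.range (ι i)) := by rw [hgen]; trivial
    induction hx using Algebra.adjoin_induction with
    | mem x hx =>
      obtain ⟨i, a, rfl⟩ := Set.mem_iUnion.1 hx
      rw [s_ι, s_ι, star_star]
    | algebraMap r => rw [s_alg, s_alg, star_star]
    | add x y _ _ hx hy => rw [s_add, s_add, hx, hy]
    | mul x y _ _ hx hy => rw [s_mul, s_mul, hx, hy]
  let SR : StarRing P :=
    { star := s
      star_involutive := s_inv
      star_mul := s_mul
      star_add := s_add }
  refine ⟨SR, ⟨fun c x => ?_⟩, s_ι⟩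
  change s (c • x) = star c • s x
  rw [Algebra.smul_def, s_mul, s_alg, Algebra.smul_def, Algebra.commutes]

section Rep

variable {I : Type u} {J : I → Type v}

/-- Reduced words. -/
abbrev Word (J : I → Type v) : Type (max u v) :=
  {l : List (Σ i, J i) // l.IsChain (fun p q => p.1 ≠ q.1)}

/-- The word does not start with a letter of index `i`. -/
def NS (i : I) (w : Word J) : Prop := ∀ y ∈ w.1.head?, i ≠ y.1

open Classical in
/-- Prepend a letter. -/
noncomputable def Word.cons (i : I) (k : J i) (w : Word J) : Word J :=
  if h : NS i w then ⟨⟨i, k⟩ :: w.1, List.isChain_cons.2 ⟨h, w.2⟩⟩ else w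

open Classical in
/-- Remove the first letter if it has index `i`. -/
noncomputable def Word.rest (i : I) (w : Word J) : Word J :=
  if NS i w then w else ⟨w.1.tail, w.2.tail⟩

/-- The empty word. -/
def Word.nil : Word J := ⟨[], List.isChain_nil⟩

theorem NS_nil (i : I) : NS i (Word.nil : Word J) := by simp [NS, Word.nil]

theorem cons_val {i : I} {w : Word J} (h : NS i w) (k : J i) :
    (Word.cons i k w).1 = ⟨i, k⟩ :: w.1 := by simp [Word.cons, h]

theorem not_NS_cons {i : I} {w : Word J} (h : NS i w) (k : J i) : ¬ NS i (Word.cons i k w) := by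
  rw [NS, cons_val h]; simp

theorem rest_cons {i : I} {w : Word J} (h : NS i w) (k : J i) :
    Word.rest i (Word.cons i k w) = w := by
  rw [Word.rest, if_neg (not_NS_cons h k)]
  apply Subtype.ext
  simp [cons_val h]

theorem rest_NS {i : I} {w : Word J} (h : NS i w) : Word.rest i w = w := if_pos h

theorem word_cases (i : I) (w : Word J) :
    NS i w ∨ ∃ k w', NS i w' ∧ w = Word.cons i k w' := by
  by_cases h : NS i w
  · exact Or.inl h
  · right
    obtain ⟨l, hl⟩ := w
    cases l with
    | nil => exact absurd (NS_nil i) h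
    | cons p l =>
      obtain ⟨j, k⟩ := p
      have hij : i = j := by
        by_contra hne
        exact h (by intro y hy; simp at hy; subst hy; exact hne)
      subst hij
      have h' : NS i (⟨l, hl.tail⟩ : Word J) := (List.isChain_cons.1 hl).1
      exact ⟨k, ⟨l, hl.tail⟩, h', Subtype.ext (by rw [cons_val h'])⟩

variable {A : I → Type v} [∀ i, Ring (A i)] [∀ i, Algebra ℂ (A i)]
  (φ : ∀ i, A i →ₗ[ℂ] ℂ) (hφ : ∀ i, φ i 1 = 1)
  (b : ∀ i, Module.Basis (J i) ℂ (LinearMap.ker (φ i)))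

open Classical in
/-- The algebra element attached to the first letter. -/
noncomputable def eltL (i : I) : List (Σ i, J i) → A i
  | [] => 1
  | p :: _ => if h : p.1 = i then (b i (h ▸ p.2) : A i) else 1

theorem elt_cons {i : I} {w : Word J} (h : NS i w) (k : J i) :
    eltL φ b i (Word.cons i k w).1 = b i k := by
  rw [cons_val h]; simp [eltL]

theorem elt_NS {i : I} {w : Word J} (h : NS i w) : eltL φ b i w.1 = 1 := by
  obtain ⟨l, hl⟩ := w
  cases l with
  | nil => rfl
  | cons p l =>
    have : i ≠ p.1 := h p (by simp)
    simp [eltL, Ne.symm this]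

include hφ in
theorem lin_ext {F : Type*} [AddCommGroup F] [Module ℂ F] {i : I} {L L' : A i →ₗ[ℂ] F}
    (h1 : L 1 = L' 1) (h2 : ∀ k, L (b i k) = L' (b i k)) : L = L' := by
  have h3 : L ∘ₗ (LinearMap.ker (φ i)).subtype = L' ∘ₗ (LinearMap.ker (φ i)).subtype :=
    (b i).ext h2
  ext x
  have hx : x - φ i x • 1 ∈ LinearMap.ker (φ i) := by simp [hφ]
  have h4 := DFunLike.congr_fun h3 ⟨_, hx⟩
  simp only [LinearMap.comp_apply, Submodule.subtype_apply, map_sub, map_smul, h1] at h4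
  simpa using h4

/-- Centering. -/
noncomputable def ctr (i : I) : A i →ₗ[ℂ] LinearMap.ker (φ i) :=
  LinearMap.codRestrict _ (LinearMap.id - (φ i).smulRight (1 : A i)) (by simp [hφ])

theorem ctr_coe (i : I) (a : A i) : (ctr φ hφ i a : A i) = a - φ i a • 1 := rfl

/-- The vector `a ⊗ w`. -/
noncomputable def T (i : I) (w : Word J) : A i →ₗ[ℂ] (Word J →₀ ℂ) :=
  (φ i).smulRight (Finsupp.single w 1) +
    (Finsupp.lmapDomain ℂ ℂ (fun k => Word.cons i k w)) ∘ₗ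
      (b i).repr.toLinearMap ∘ₗ ctr φ hφ i

theorem T_one (i : I) (w : Word J) : T φ hφ b i w 1 = Finsupp.single w 1 := by
  have : ctr φ hφ i 1 = 0 := by ext; simp [ctr_coe, hφ]
  simp [T, this, hφ]

theorem ctr_ker {i : I} {a : A i} (h : φ i a = 0) : ctr φ hφ i a = ⟨a, h⟩ := by
  ext; simp [ctr_coe, h]

theorem T_basis (i : I) (w : Word J) (k : J i) :
    T φ hφ b i w (b i k) = Finsupp.single (Word.cons i k w) 1 := by
  have h0 : φ i (b i k) = 0 := (b i k).2
  have h1 : (⟨(b i k : A i), h0⟩ : LinearMap.ker (φ i)) = b i k := rfl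
  simp [T, ctr_ker φ hφ h0, h0, h1]

/-- The left action. -/
noncomputable def act (i : I) (a : A i) : (Word J →₀ ℂ) →ₗ[ℂ] (Word J →₀ ℂ) :=
  Finsupp.linearCombination ℂ
    (fun w : Word J => T φ hφ b i (Word.rest i w) (a * eltL φ b i w.1))

theorem act_single (i : I) (a : A i) (w : Word J) :
    act φ hφ b i a (Finsupp.single w 1) = T φ hφ b i (Word.rest i w) (a * eltL φ b i w.1) := by
  simp [act]

theorem act_T {i : I} {w : Word J} (h : NS i w) (a c : A i) :
    act φ hφ b i a (T φ hφ b i w c) = T φ hφ b i w (a * c) := by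
  have : act φ hφ b i a ∘ₗ T φ hφ b i w = T φ hφ b i w ∘ₗ LinearMap.mulLeft ℂ a := by
    apply lin_ext φ hφ b
    · simp [T_one, act_single, rest_NS h, elt_NS φ b h]
    · intro k
      simp [T_basis, act_single, rest_cons h, elt_cons φ b h]
  exact DFunLike.congr_fun this c

theorem single_eq_T (i : I) (w : Word J) : ∃ w' c, NS i w' ∧
    (Finsupp.single w 1 : Word J →₀ ℂ) = T φ hφ b i w' c := by
  rcases word_cases i w with h | ⟨k, w', h, rfl⟩
  · exact ⟨w, 1, h, (T_one φ hφ b i w).symm⟩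
  · exact ⟨w', b i k, h, (T_basis φ hφ b i w' k).symm⟩

/-- The left action as an algebra homomorphism. -/
noncomputable def rep (i : I) : A i →ₐ[ℂ] Module.End ℂ (Word J →₀ ℂ) :=
  AlgHom.ofLinearMap
    { toFun := act φ hφ b i
      map_add' := fun x y => by
        ext1 w; ext1
        simp [act_single, add_mul]
      map_smul' := fun x y => by
        ext1 w; ext1
        simp [act_single] }
    (by
      apply Finsupp.lhom_ext'; intro w; ext1
      obtain ⟨w', c, h, e⟩ := single_eq_T φ hφ b i w
      simp [e, act_T φ hφ b h])
    (fun x y => by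
      apply Finsupp.lhom_ext'; intro w; ext1
      obtain ⟨w', c, h, e⟩ := single_eq_T φ hφ b i w
      simp [e, act_T φ hφ b h, mul_assoc])

theorem rep_apply (i : I) (a : A i) : rep φ hφ b i a = act φ hφ b i a := rfl

theorem act_nil (i : I) (a : A i) :
    act φ hφ b i a (Finsupp.single Word.nil 1) = T φ hφ b i Word.nil a := by
  rw [act_single, rest_NS (NS_nil i), elt_NS φ b (NS_nil i), mul_one]

theorem T_nil (i : I) (a : A i) : T φ hφ b i Word.nil a Word.nil = φ i a := by
  have h : ∀ k, Word.cons i k (Word.nil : Word J) ≠ Word.nil := fun k h => by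
    have := congrArg Subtype.val h
    rw [cons_val (NS_nil i)] at this
    simp [Word.nil] at this
  have : Finsupp.lapply Word.nil ∘ₗ T φ hφ b i Word.nil = φ i := by
    apply lin_ext φ hφ b
    · simp [T_one, hφ]
    · intro k
      have h0 : φ i (b i k) = 0 := (b i k).2
      simp [T_basis, h0, h]
  exact DFunLike.congr_fun this a

theorem T_inj (i : I) (a : A i) (h : T φ hφ b i Word.nil a = 0) : a = 0 := by
  have h0 : φ i a = 0 := by rw [← T_nil φ hφ b, h]; rfl
  have hinj : Function.Injective (fun k => Word.cons i k (Word.nil : Word J)) := fun k k' hk => by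
    have := congrArg Subtype.val hk
    simpa [cons_val (NS_nil i)] using this
  have h1 : Finsupp.mapDomain (fun k => Word.cons i k (Word.nil : Word J))
      ((b i).repr ⟨a, h0⟩) = 0 := by
    simpa [T, ctr_ker φ hφ h0, h0] using h
  have h2 := Finsupp.mapDomain_injective hinj (h1.trans Finsupp.mapDomain_zero.symm)
  have h3 : (⟨a, h0⟩ : LinearMap.ker (φ i)) = 0 := by simpa using h2
  exact congrArg Subtype.val h3

theorem act_supported {i : I} {a : A i} (h0 : φ i a = 0) {o : Option I} (ho : o ≠ some i)
    {x : Word J →₀ ℂ}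
    (hx : x ∈ Finsupp.supported ℂ ℂ {w : Word J | w.1.head?.map Sigma.fst = o}) :
    act φ hφ b i a x ∈
      Finsupp.supported ℂ ℂ {w : Word J | w.1.head?.map Sigma.fst = some i} := by
  rw [Finsupp.supported_eq_span_single] at hx
  induction hx using Submodule.span_induction with
  | mem x hx =>
    obtain ⟨w, hw, rfl⟩ := hx
    have hN : NS i w := by
      intro y hy e
      apply ho
      rw [← hw, Option.mem_def.1 hy, e]; rfl
    rw [act_single, rest_NS hN, elt_NS φ b hN, mul_one]
    simp only [T, h0, ctr_ker φ hφ h0, LinearMap.add_apply, LinearMap.smulRight_apply, zero_smul,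
      zero_add, LinearMap.comp_apply]
    rw [Finsupp.lmapDomain_apply, Finsupp.mapDomain]
    refine Submodule.sum_mem _ fun k _ => Finsupp.single_mem_supported _ _ ?_
    simp [cons_val hN]
  | zero => simp
  | add x y _ _ hx hy => rw [map_add]; exact Submodule.add_mem _ hx hy
  | smul c x _ hx => rw [map_smul]; exact Submodule.smul_mem _ _ hx

end Rep

theorem exists_state {I : Type u} (A : I → Type v) [∀ i, Ring (A i)] [∀ i, Algebra ℂ (A i)]
    (φ : ∀ i, A i →ₗ[ℂ] ℂ) (hφ : ∀ i, φ i 1 = 1)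
    (P : Type (max u v)) [Ring P] [Algebra ℂ P] (ι : ∀ i, A i →ₐ[ℂ] P)
    (hlift : ∀ (B : Type (max u v)) [Ring B] [Algebra ℂ B] (f : ∀ i, A i →ₐ[ℂ] B),
        ∃ g : P →ₐ[ℂ] B, ∀ i a, g (ι i a) = f i a) :
    ∃ ψ : P →ₗ[ℂ] ℂ, ψ 1 = 1 ∧ (∀ i, Function.Injective (ι i)) ∧
      (∀ i a, ψ (ι i a) = φ i a) ∧
      ∀ l : List (Σ i, A i), l ≠ [] → l.IsChain (fun p q => p.1 ≠ q.1) →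
        (∀ p ∈ l, φ p.1 p.2 = 0) → ψ (l.map (fun p => ι p.1 p.2)).prod = 0 := by
  let b := fun i => Module.Basis.ofVectorSpace ℂ (LinearMap.ker (φ i))
  obtain ⟨g, hg⟩ := hlift (Module.End ℂ (Word
    (fun i => Module.Basis.ofVectorSpaceIndex ℂ (LinearMap.ker (φ i))) →₀ ℂ)) (rep φ hφ b)
  let Ω := (Finsupp.single Word.nil 1 :
    Word (fun i => Module.Basis.ofVectorSpaceIndex ℂ (LinearMap.ker (φ i))) →₀ ℂ)
  let ψ : P →ₗ[ℂ] ℂ := Finsupp.lapply Word.nil ∘ₗ LinearMap.applyₗ Ω ∘ₗ g.toLinearMap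
  have hψ : ∀ x, ψ x = g x Ω Word.nil := fun x => rfl
  refine ⟨ψ, ?_, ?_, ?_, ?_⟩
  · simp [hψ, Ω]
  · intro i
    rw [injective_iff_map_eq_zero]
    intro a ha
    apply T_inj φ hφ b i a
    rw [← act_nil, ← rep_apply, ← hg, ha, map_zero]; rfl
  · intro i a
    rw [hψ, hg, rep_apply, act_nil, T_nil]
  · have key : ∀ l : List (Σ i, A i), l.IsChain (fun p q => p.1 ≠ q.1) →
        (∀ p ∈ l, φ p.1 p.2 = 0) → g (l.map (fun p => ι p.1 p.2)).prod Ω ∈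
          Finsupp.supported ℂ ℂ {w | w.1.head?.map Sigma.fst = l.head?.map Sigma.fst} := by
      intro l
      induction l with
      | nil =>
        intro _ _
        simp only [List.map_nil, List.prod_nil, map_one, Module.End.one_apply]
        exact Finsupp.single_mem_supported _ _ (by simp [Word.nil])
      | cons p l ih =>
        intro hc h0
        have h1 := ih hc.tail (fun q hq => h0 q (List.mem_cons_of_mem _ hq))
        rw [List.map_cons, List.prod_cons, map_mul, Module.End.mul_apply, hg, rep_apply]
        refine act_supported φ hφ b (h0 p (by simp)) ?_ h1
        intro e
        obtain ⟨q, hq, e⟩ := Option.map_eq_some_iff.1 e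
        exact (List.isChain_cons.1 hc).1 q hq e.symm
    intro l hl hc h0
    have h1 := key l hc h0
    rw [hψ]
    by_contra hne
    have h2 := (Finsupp.mem_supported _ _).1 h1 (Finsupp.mem_support_iff.2 hne)
    cases l with
    | nil => exact hl rfl
    | cons p l => simp [Word.nil] at h2

theorem phi_herm {A : Type*} [Ring A] [Algebra ℂ A] [StarRing A] [StarModule ℂ A]
    (φ : A →ₗ[ℂ] ℂ) (hpos : ∀ a : A, 0 ≤ φ (star a * a)) (a b : A) :
    star (φ (star a * b)) = φ (star b * a) := by
  have ha := (Complex.nonneg_iff.1 (hpos a)).2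
  have hb := (Complex.nonneg_iff.1 (hpos b)).2
  have h1 := (Complex.nonneg_iff.1 (hpos (a + b))).2
  have h2 := (Complex.nonneg_iff.1 (hpos (a + Complex.I • b))).2
  simp [add_mul, mul_add] at h1 h2
  apply Complex.ext
  · simp; linarith
  · simp; linarith

theorem gram_psd {A : Type*} [Ring A] [Algebra ℂ A] [StarRing A] [StarModule ℂ A]
    (φ : A →ₗ[ℂ] ℂ) (hpos : ∀ a : A, 0 ≤ φ (star a * a)) {X : Type*} (f : X → A) (x : X →₀ ℂ) :
    0 ≤ x.sum fun i xi ↦ x.sum fun j xj ↦ star xi * φ (star (f i) * f j) * xj := by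
  have h := hpos (x.sum fun i c => c • f i)
  convert h using 1
  simp only [Finsupp.sum, star_sum, Finset.sum_mul_sum, map_sum, star_smul, smul_mul_smul_comm,
    map_smul, smul_eq_mul]
  refine Finset.sum_congr rfl fun i _ => Finset.sum_congr rfl fun j _ => ?_
  ring

section

variable {I : Type u} {A : I → Type v} [∀ i, Ring (A i)] [∀ i, Algebra ℂ (A i)]
  [∀ i, StarRing (A i)] [∀ i, StarModule ℂ (A i)]
  (φ : ∀ i, A i →ₗ[ℂ] ℂ)

open Classical in
/-- Component of a letter at index `i`. -/
noncomputable def comp (i : I) : Option (Σ i, A i) → A i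
  | none => 0
  | some p => if h : p.1 = i then h ▸ p.2 else 0

theorem comp_same (i : I) (a : A i) : comp i (some ⟨i, a⟩) = a := by simp [comp]

theorem comp_ne {i j : I} (h : j ≠ i) (a : A j) : comp i (some ⟨j, a⟩) = 0 := by simp [comp, h]

open Classical in
/-- The letter kernel. -/
noncomputable def ker1 : Matrix (Option (Σ i, A i)) (Option (Σ i, A i)) ℂ
  | none, q => if q = none then 1 else 0
  | some p, q => φ p.1 (star p.2 * comp p.1 q)

theorem ker1_psd (hpos : ∀ i, ∀ a : A i, 0 ≤ φ i (star a * a)) : (ker1 φ).PosSemidef := by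
  classical
  refine ⟨?_, fun x => ?_⟩
  · ext p q
    rw [Matrix.conjTranspose_apply]
    rcases p with _ | ⟨i, a⟩ <;> rcases q with _ | ⟨j, c⟩
    · simp [ker1]
    · simp [ker1, comp]
    · simp [ker1, comp]
    · by_cases h : i = j
      · subst h
        simp only [ker1, comp_same]
        exact phi_herm _ (hpos i) _ _
      · simp [ker1, comp_ne h, comp_ne (Ne.symm h)]
  · let S : Finset I := x.support.biUnion (fun p => p.elim ∅ (fun p => {p.1}))
    have hS : ∀ i a, some ⟨i, a⟩ ∈ x.support → i ∈ S := fun i a h =>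
      Finset.mem_biUnion.2 ⟨_, h, by simp⟩
    have hk : ∀ p ∈ x.support, ∀ q ∈ x.support, ker1 φ p q =
        (if p = none then (1 : ℂ) else 0) * (if q = none then 1 else 0) +
        ∑ i ∈ S, φ i (star (comp i p) * comp i q) := by
      intro p hp q hq
      rcases p with _ | ⟨i, a⟩
      · simp [ker1, comp]
      · rw [Finset.sum_eq_single_of_mem i (hS i a hp)]
        · simp [ker1, comp_same]
        · intro j _ hj
          simp [comp_ne (Ne.symm hj)]
    have e : (x.sum fun i xi ↦ x.sum fun j xj ↦ star xi * ker1 φ i j * xj) =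
        star (x none) * x none +
        ∑ i ∈ S, x.sum fun p xi ↦ x.sum fun q xj ↦
          star xi * φ i (star (comp i p) * comp i q) * xj := by
      have e1 : (x.sum fun i xi ↦ x.sum fun j xj ↦ star xi * ker1 φ i j * xj) =
          ∑ p ∈ x.support, ∑ q ∈ x.support,
            ((star (x p) * (if p = none then (1 : ℂ) else 0)) *
              ((if q = none then (1 : ℂ) else 0) * x q) +
            ∑ i ∈ S, star (x p) * φ i (star (comp i p) * comp i q) * x q) := by
        refine Finset.sum_congr rfl fun p hp => Finset.sum_congr rfl fun q hq => ?_
        change star (x p) * ker1 φ p q * x q = _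
        rw [hk p hp q hq, mul_add, add_mul, Finset.mul_sum, Finset.sum_mul]
        ring
      rw [e1]
      simp only [Finset.sum_add_distrib]
      congr 1
      · rw [← Finset.sum_mul_sum]
        by_cases h0 : x none = 0 <;> simp [h0]
      · simp only [Finsupp.sum]
        rw [Finset.sum_comm]
        simp only [Finset.sum_comm (s := S)]
        try rw [Finset.sum_comm]
    rw [e]
    exact add_nonneg (star_mul_self_nonneg _)
      (Finset.sum_nonneg fun i _ => gram_psd (φ i) (hpos i) (comp i) x)

/-- Kernel on words. -/
noncomputable def G : ℕ → Matrix (List (Σ i, A i)) (List (Σ i, A i)) ℂ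
  | 0 => fun _ _ => 1
  | n + 1 => ((ker1 φ).submatrix List.head? List.head?).hadamard
      ((G n).submatrix List.tail List.tail)

theorem G_psd (hpos : ∀ i, ∀ a : A i, 0 ≤ φ i (star a * a)) (n : ℕ) : (G φ n).PosSemidef := by
  induction n with
  | zero =>
    refine ⟨by ext p q; exact star_one ℂ, fun x => ?_⟩
    have := star_mul_self_nonneg (x.sum fun _ c => c)
    convert this using 1
    simp [G, Finsupp.sum, Finset.sum_mul_sum]
  | succ n ih =>
    exact ((ker1_psd φ hpos).submatrix _).hadamard (ih.submatrix _)

variable (hφ : ∀ i, φ i 1 = 1) (hpos : ∀ i, ∀ a : A i, 0 ≤ φ i (star a * a))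
  {P : Type (max u v)} [Ring P] [Algebra ℂ P] [StarRing P] [StarModule ℂ P]
  (ι : ∀ i, A i →ₐ[ℂ] P) (hstar : ∀ i a, star (ι i a) = ι i (star a))
  (hgen : Algebra.adjoin ℂ (⋃ i, Set.range (ι i)) = ⊤)
  (ψ : P →ₗ[ℂ] ℂ) (hψ1 : ψ 1 = 1)
  (hfree : ∀ l : List (Σ i, A i), l ≠ [] → l.IsChain (fun p q => p.1 ≠ q.1) →
        (∀ p ∈ l, φ p.1 p.2 = 0) → ψ (l.map (fun p => ι p.1 p.2)).prod = 0)

/-- Centered alternating words. -/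
def Good (l : List (Σ i, A i)) : Prop :=
  l.IsChain (fun p q => p.1 ≠ q.1) ∧ ∀ p ∈ l, φ p.1 p.2 = 0

/-- Evaluation of a word. -/
def ev (l : List (Σ i, A i)) : P := (l.map (fun p => ι p.1 p.2)).prod

/-- Adjoint word. -/
def adj (l : List (Σ i, A i)) : List (Σ i, A i) := (l.map fun p => ⟨p.1, star p.2⟩).reverse

omit [∀ i, StarRing (A i)] [∀ i, StarModule ℂ (A i)] [StarRing P] [StarModule ℂ P] in
theorem ev_cons (p : Σ i, A i) (l : List (Σ i, A i)) : ev ι (p :: l) = ι p.1 p.2 * ev ι l := by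
  simp [ev]

omit [∀ i, StarRing (A i)] [∀ i, StarModule ℂ (A i)] [StarRing P] [StarModule ℂ P] in
theorem ev_append (l m : List (Σ i, A i)) : ev ι (l ++ m) = ev ι l * ev ι m := by
  simp [ev]

omit [∀ i, StarModule ℂ (A i)] [StarModule ℂ P] in
include hstar in
theorem ev_adj (l : List (Σ i, A i)) : ev ι (adj l) = star (ev ι l) := by
  induction l with
  | nil => simp [ev, adj]
  | cons p l ih =>
    rw [ev_cons, star_mul, ← ih, hstar]
    simp [ev, adj]

theorem phi_star {A : Type*} [Ring A] [Algebra ℂ A] [StarRing A] [StarModule ℂ A]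
    (φ : A →ₗ[ℂ] ℂ) (hpos : ∀ a : A, 0 ≤ φ (star a * a)) {a : A} (h : φ a = 0) :
    φ (star a) = 0 := by
  have := phi_herm φ hpos 1 a
  simpa [h] using this.symm

include hpos in
theorem good_adj {l : List (Σ i, A i)} (h : Good φ l) : Good φ (adj l) := by
  refine ⟨?_, ?_⟩
  · rw [adj, List.isChain_reverse, List.isChain_map]
    exact h.1.imp fun _ _ h => h.symm
  · intro p hp
    rw [adj, List.mem_reverse, List.mem_map] at hp
    obtain ⟨q, hq, rfl⟩ := hp
    exact phi_star _ (hpos _) (h.2 q hq)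

theorem getLast_adj (l : List (Σ i, A i)) :
    (adj l).getLast? = l.head?.map fun p => ⟨p.1, star p.2⟩ := by
  simp [adj]

include hφ hpos hstar hψ1 hfree in
theorem gram (n : ℕ) : ∀ l m : List (Σ i, A i), l.length ≤ n → m.length ≤ n →
    Good φ l → Good φ m → ψ (star (ev ι l) * ev ι m) = G φ n l m := by
  induction n with
  | zero =>
    intro l m hl hm _ _
    simp only [Nat.le_zero, List.length_eq_zero_iff] at hl hm
    subst hl hm
    simp [ev, G, hψ1]
  | succ n ih =>
    intro l m hl hm gl gm
    change _ = ker1 φ l.head? m.head? * G φ n l.tail m.tail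
    have hz : ∀ w, w ≠ [] → Good φ w → ψ (ev ι w) = 0 := fun w h0 hw => hfree w h0 hw.1 hw.2
    rw [← ev_adj ι hstar]
    have gl' := good_adj φ hpos gl
    rcases l with _ | ⟨⟨i, a⟩, l⟩ <;> rcases m with _ | ⟨⟨j, c⟩, m⟩
    · have := ih [] [] (by simp) (by simp) gl gm
      simp only [List.head?_nil, List.tail_nil, ← this]
      simp [ev, adj, ker1, hψ1]
    · rw [← ev_append, hz]
      · simp [ker1]
      · simp
      · simpa [adj] using gm
    · rw [← ev_append, hz]
      · simp [ker1, comp]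
      · simp [adj]
      · simpa using gl'
    · by_cases hij : i = j
      · subst hij
        have gl1 : Good φ l := ⟨gl.1.tail, fun p hp => gl.2 p (List.mem_cons_of_mem _ hp)⟩
        have gm1 : Good φ m := ⟨gm.1.tail, fun p hp => gm.2 p (List.mem_cons_of_mem _ hp)⟩
        have gl2 := good_adj φ hpos gl1
        have h1 := ih l m (by simpa using hl) (by simpa using hm) gl1 gm1
        simp only [List.head?_cons, List.tail_cons, ker1, comp_same, ← h1]
        set t := φ i (star a * c) with ht
        have h2 : ψ (ev ι (adj l ++ ⟨i, star a * c - t • 1⟩ :: m)) = 0 := by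
          apply hz _ (by simp)
          refine ⟨?_, ?_⟩
          · rw [List.isChain_append]
            refine ⟨gl2.1, List.isChain_cons.2 ⟨(List.isChain_cons.1 gm.1).1, gm1.1⟩, ?_⟩
            intro x hx y hy
            rw [getLast_adj] at hx
            obtain ⟨q, hq, rfl⟩ := Option.map_eq_some_iff.1 hx
            simp at hy
            subst hy
            exact ((List.isChain_cons.1 gl.1).1 q hq).symm
          · intro p hp
            rw [List.mem_append, List.mem_cons] at hp
            rcases hp with hp | rfl | hp
            · exact gl2.2 p hp
            · simp [hφ, ht]
            · exact gm1.2 p hp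
        rw [ev_append, ev_cons, ev_adj ι hstar] at h2
        rw [ev_adj ι hstar, ev_cons, ev_cons, star_mul, hstar]
        have h3 : star (ev ι l) * ι i (star a) * (ι i c * ev ι m) =
            star (ev ι l) * (ι i (star a * c - t • 1) * ev ι m) +
              t • (star (ev ι l) * ev ι m) := by
          simp [sub_mul, mul_sub, mul_assoc]
        simp only
        rw [h3, map_add, h2, map_smul, zero_add, smul_eq_mul]
      · rw [← ev_append, hz]
        · simp [ker1, comp_ne (Ne.symm hij)]
        · simp
        · refine ⟨?_, ?_⟩
          · rw [List.isChain_append]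
            refine ⟨gl'.1, gm.1, ?_⟩
            intro x hx y hy
            rw [getLast_adj] at hx
            simp at hx hy
            subst hx hy
            exact hij
          · intro p hp
            rcases List.mem_append.1 hp with hp | hp
            · exact gl'.2 p hp
            · exact gm.2 p hp

omit [∀ i, StarRing (A i)] [∀ i, StarModule ℂ (A i)] [StarRing P] [StarModule ℂ P] in
include hφ hgen in
theorem span_good (x : P) : x ∈ Submodule.span ℂ (Set.image (ev ι) {l | Good φ l}) := by
  set S := Submodule.span ℂ (Set.image (ev ι) {l | Good φ l}) with hS
  have hmem : ∀ l, Good φ l → ev ι l ∈ S := fun l hl => Submodule.subset_span ⟨l, hl, rfl⟩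
  have key : ∀ i (a : A i) l, Good φ l → (∀ q ∈ l.head?, i ≠ q.1) →
      ι i a * ev ι l ∈ S := by
    intro i a l hl hi
    have h1 : Good φ (⟨i, a - φ i a • 1⟩ :: l) := by
      refine ⟨List.isChain_cons.2 ⟨hi, hl.1⟩, ?_⟩
      intro p hp
      rcases List.mem_cons.1 hp with rfl | hp
      · simp [hφ]
      · exact hl.2 p hp
    have h2 : ι i a * ev ι l = ev ι (⟨i, a - φ i a • 1⟩ :: l) + φ i a • ev ι l := by
      rw [ev_cons]; simp [sub_mul]
    rw [h2]
    exact S.add_mem (hmem _ h1) (S.smul_mem _ (hmem _ hl))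
  have step : ∀ i (a : A i) y, y ∈ S → ι i a * y ∈ S := by
    intro i a y hy
    induction hy using Submodule.span_induction with
    | mem y hy =>
      obtain ⟨l, hl, rfl⟩ := hy
      rcases l with _ | ⟨⟨j, c⟩, l⟩
      · exact key i a [] hl (by simp)
      · by_cases hij : i = j
        · subst hij
          rw [ev_cons, ← mul_assoc, ← map_mul]
          exact key i _ l ⟨hl.1.tail, fun p hp => hl.2 p (List.mem_cons_of_mem _ hp)⟩
            (List.isChain_cons.1 hl.1).1
        · exact key i a _ hl (by simpa using hij)
    | zero => simp
    | add y z _ _ hy hz => rw [mul_add]; exact S.add_mem hy hz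
    | smul c y _ hy => rw [mul_smul_comm]; exact S.smul_mem _ hy
  have all : ∀ y ∈ S, x * y ∈ S := by
    have hx : x ∈ Algebra.adjoin ℂ (⋃ i, Set.range (ι i)) := by rw [hgen]; trivial
    induction hx using Algebra.adjoin_induction with
    | mem x hx =>
      obtain ⟨i, a, rfl⟩ := Set.mem_iUnion.1 hx
      exact step i a
    | algebraMap r =>
      intro y hy
      rw [← Algebra.smul_def]; exact S.smul_mem _ hy
    | add x y _ _ hx hy =>
      intro z hz
      rw [add_mul]; exact S.add_mem (hx z hz) (hy z hz)
    | mul x y _ _ hx hy =>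
      intro z hz
      rw [mul_assoc]; exact hx _ (hy z hz)
  have h1 : (1 : P) ∈ S := by
    have := hmem [] ⟨List.isChain_nil, by simp⟩
    simpa [ev] using this
  simpa using all 1 h1

include hφ hpos hstar hgen hψ1 hfree in
theorem psi_pos (x : P) : 0 ≤ ψ (star x * x) := by
  obtain ⟨f, hf, rfl⟩ :=
    (Finsupp.mem_span_image_iff_linearCombination ℂ).1 (span_good φ hφ ι hgen x)
  rw [Finsupp.mem_supported] at hf
  let n := f.support.sup List.length
  have hn : ∀ l ∈ f.support, l.length ≤ n := fun l hl => Finset.le_sup (f := List.length) hl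
  have h := (G_psd φ hpos n).2 f
  convert h using 1
  simp only [Finsupp.linearCombination_apply, Finsupp.sum, star_sum, Finset.sum_mul_sum, map_sum,
    star_smul, smul_mul_smul_comm, map_smul, smul_eq_mul]
  refine Finset.sum_congr rfl fun l hl => Finset.sum_congr rfl fun m hm => ?_
  rw [gram φ hφ hpos ι hstar ψ hψ1 hfree n l m (hn l hl) (hn m hm) (hf hl) (hf hm)]
  ring

end

end FreeProdAux

/-- **Free product of `*`-probability spaces.**
Given a family of `*`-probability spaces `(A i, φ i)` (each `φ i` is a unital linear
functional that is positive: `φ i (star a * a)` is a nonnegative real for all `a`),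
there exists a `*`-probability space `(B, ψ)` together with injective unital
`*`-algebra homomorphisms `ι i : A i →⋆ₐ[ℂ] B` such that `ψ ∘ ι i = φ i` for every
`i`, and the images of the `A i` are freely independent in `(B, ψ)` in the moment
sense. -/
theorem free_product_of_star_prob_exists {I : Type u} (A : I → Type v)
    [∀ i, Ring (A i)] [∀ i, Algebra ℂ (A i)] [∀ i, StarRing (A i)]
    [∀ i, StarModule ℂ (A i)]
    (φ : ∀ i, A i →ₗ[ℂ] ℂ) (hφ : ∀ i, φ i 1 = 1)
    (hpos : ∀ i, ∀ a : A i, 0 ≤ φ i (star a * a)) :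
    ∃ (B : Type (max u v)) (_ : Ring B) (_ : Algebra ℂ B) (_ : StarRing B)
      (_ : StarModule ℂ B) (ψ : B →ₗ[ℂ] ℂ)
      (ι : ∀ i, A i →⋆ₐ[ℂ] B),
      ψ 1 = 1 ∧
      (∀ b : B, 0 ≤ ψ (star b * b)) ∧
      (∀ i, Function.Injective (ι i)) ∧
      (∀ i a, ψ (ι i a) = φ i a) ∧
      FreeIndepMoment ψ (fun i => Set.range (ι i)) := by
  obtain ⟨P, _, _, j, hlift, hgen⟩ := FreeProdAux.exists_univ A
  obtain ⟨_, _, hstar⟩ := FreeProdAux.exists_star A P j hlift hgen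
  obtain ⟨ψ, h1, hinj, hj, hfree⟩ := FreeProdAux.exists_state A φ hφ P j hlift
  refine ⟨P, inferInstance, inferInstance, inferInstance, inferInstance, ψ,
    fun i => { j i with map_star' := fun a => (hstar i a).symm }, h1,
    FreeProdAux.psi_pos φ hφ hpos j hstar hgen ψ h1 hfree, hinj, hj, ?_⟩
  intro k hk a idx ha h0 hidx
  choose c hc using ha
  have hc' : ∀ t, j (idx t) (c t) = a t := hc
  have h2 := hfree (List.ofFn fun t => (⟨idx t, c t⟩ : Σ i, A i))
    (by simpa using hk.ne')
    (by
      rw [List.isChain_ofFn]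
      intro t ht
      exact hidx _ _ rfl)
    (by
      intro p hp
      obtain ⟨t, rfl⟩ := (List.mem_ofFn' _ _).1 hp
      change φ (idx t) (c t) = 0
      rw [← hj, hc', h0])
  rw [List.map_ofFn] at h2
  have h3 : ((fun p : Σ i, A i => j p.1 p.2) ∘ fun t => (⟨idx t, c t⟩ : Σ i, A i)) = a :=
    funext hc'
  rwa [h3] at h2
end

section
/- Let (A, φ) be a non-commutative probability space with free cumulants (κ_n), and let (A_i)_{i∈I} be unital subalgebras of A. Then the following are equivalent: (a) for all n ≥ 2 and all a_1, …, a_n with each a_j ∈ A_{i(j)} for some i(j) ∈ I such that at least two of the indices i(j) differ, κ_n(a_1, …, a_n) = 0; (b) the subalgebras (A_i)_{i∈I} are freely independent in the moment sense. -/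
open scoped BigOperators ComplexOrder

/-- A partition of `{0, …, n-1}` is non-crossing if whenever `p < q < r < s`,
`p, r` lie in a block `B` and `q, s` lie in a block `C`, then `B = C`. -/
def IsNonCrossing {n : ℕ} (π : Finpartition (Finset.univ : Finset (Fin n))) : Prop :=
  ∀ (p q r s : Fin n), p < q → q < r → r < s →
    ∀ B ∈ π.parts, ∀ C ∈ π.parts, p ∈ B → r ∈ B → q ∈ C → s ∈ C → B = C

/-- The multiplicative extension `κ_π[a_1, …, a_n] = ∏_{V ∈ π} κ_{|V|}(a_{i_1}, …, a_{i_s})`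
of a family of multilinear functionals `κ_n : A^n → ℂ`, where each block
`V = {i_1 < ⋯ < i_s}` is listed in increasing order. -/
noncomputable def partCum {A : Type*} [Ring A] [Algebra ℂ A]
    (κ : ∀ n, MultilinearMap ℂ (fun _ : Fin n => A) ℂ)
    {n : ℕ} (π : Finpartition (Finset.univ : Finset (Fin n))) (a : Fin n → A) : ℂ :=
  ∏ V ∈ π.parts, κ (V.sort (· ≤ ·)).length (fun j => a ((V.sort (· ≤ ·)).get j))

open Classical in
/-- The moment–cumulant relation: `φ(a_1 ⋯ a_n) = Σ_{π ∈ NC(n)} κ_π[a_1, …, a_n]`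
for all `n ≥ 1`; it characterizes the free cumulants of `(A, φ)`. -/
def MomentCumulant {A : Type*} [Ring A] [Algebra ℂ A] (φ : A →ₗ[ℂ] ℂ)
    (κ : ∀ n, MultilinearMap ℂ (fun _ : Fin n => A) ℂ) : Prop :=
  ∀ (n : ℕ), 0 < n → ∀ a : Fin n → A,
    φ (List.ofFn a).prod =
      ∑ π ∈ Finset.univ.filter
          (fun π : Finpartition (Finset.univ : Finset (Fin n)) => IsNonCrossing π),
        partCum κ π a
/-- Free independence, in the cumulant sense, of a family of subsets `S i` of `A`:
all mixed free cumulants vanish. -/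
def FreeIndepCumulant {A : Type*} [Ring A] [Algebra ℂ A] {ι : Type*}
    (S : ι → Set A)
    (κ : ∀ n, MultilinearMap ℂ (fun _ : Fin n => A) ℂ) : Prop :=
  ∀ (n : ℕ), 2 ≤ n → ∀ (a : Fin n → A) (idx : Fin n → ι),
    (∀ j, a j ∈ S (idx j)) → (∃ j j' : Fin n, idx j ≠ idx j') →
    κ n a = 0


section AlgebraPart

variable {A : Type*} [Ring A] [Algebra ℂ A]

/-- Sum over sub-words `V` of a word, of `L V` times the moments of the gaps; `g` is the part of
the current gap that has been read. -/
def gapSum (φ : A →ₗ[ℂ] ℂ) : (List A → ℂ) → A → List A → ℂ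
  | L, g, [] => L [] * φ g
  | L, g, c :: w => φ g * gapSum φ (fun q => L (c :: q)) 1 w + gapSum φ L (g * c) w

/-- Same as `gapSum`, with an extra element in the last gap. -/
def gapSumEnd (φ : A →ₗ[ℂ] ℂ) (a : A) : (List A → ℂ) → A → List A → ℂ
  | N, g, [] => N [] * φ (g * a)
  | N, g, c :: w => φ g * gapSumEnd φ a (fun q => N (c :: q)) 1 w + gapSumEnd φ a N (g * c) w

/-- Terms of `gapSum` on `w' ++ c :: w` for which `c` is in a gap. -/
def gapSumSkip (φ : A →ₗ[ℂ] ℂ) (c : A) (w : List A) : (List A → ℂ) → A → List A → ℂ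
  | L, g, [] => gapSum φ L (g * c) w
  | L, g, d :: w1 =>
      φ g * gapSumSkip φ c w (fun q => L (d :: q)) 1 w1 + gapSumSkip φ c w L (g * d) w1

/-- `gapSum` with the first gap weighted by `h`. -/
def firstGap (φ : A →ₗ[ℂ] ℂ) (N : List A → ℂ) : (List A → ℂ) → List A → ℂ
  | h, [] => N [] * h []
  | h, c :: w => h [] * gapSum φ (fun q => N (c :: q)) 1 w + firstGap φ N (fun u => h (c :: u)) w

/-- Deconcatenation convolution. -/
def deconv (N : List A → ℂ) : (List A → ℂ) → List A → ℂ
  | J, [] => N [] * J []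
  | J, c :: q => J [] * N (c :: q) + deconv N (fun u => J (c :: u)) q

variable (φ : A →ₗ[ℂ] ℂ)

theorem gapSum_add (L L' : List A → ℂ) (g : A) (w : List A) :
    gapSum φ (fun q => L q + L' q) g w = gapSum φ L g w + gapSum φ L' g w := by
  induction w generalizing L L' g with
  | nil => simp [gapSum, add_mul]
  | cons c w ih => simp only [gapSum]; rw [ih, ih]; ring

theorem gapSum_smul (t : ℂ) (L : List A → ℂ) (g : A) (w : List A) :
    gapSum φ (fun q => t * L q) g w = t * gapSum φ L g w := by
  induction w generalizing L g with
  | nil => simp [gapSum, mul_assoc]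
  | cons c w ih => simp only [gapSum]; rw [ih, ih]; ring

theorem firstGap_add (N h h' : List A → ℂ) (w : List A) :
    firstGap φ N (fun q => h q + h' q) w = firstGap φ N h w + firstGap φ N h' w := by
  induction w generalizing h h' with
  | nil => simp [firstGap, mul_add]
  | cons c w ih => simp only [firstGap]; rw [ih]; ring

theorem firstGap_smul (t : ℂ) (N h : List A → ℂ) (w : List A) :
    firstGap φ N (fun q => t * h q) w = t * firstGap φ N h w := by
  induction w generalizing h with
  | nil => simp [firstGap]; ring
  | cons c w ih => simp only [firstGap]; rw [ih]; ring

theorem gapSum_eq_firstGap (N : List A → ℂ) (b : A) (w : List A) :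
    gapSum φ N b w = firstGap φ N (fun u => φ (b * u.prod)) w := by
  induction w generalizing b with
  | nil => simp [gapSum, firstGap]
  | cons c w ih => simp only [gapSum, firstGap]; rw [ih]; simp [mul_assoc]

theorem gapSum_deconv (N J : List A → ℂ) (g : A) (w : List A) :
    gapSum φ (deconv N J) g w = firstGap φ N (fun u => gapSum φ J g u) w := by
  induction w generalizing J g with
  | nil => simp [gapSum, firstGap, deconv, mul_assoc]
  | cons c w ih =>
    simp only [gapSum, firstGap, deconv]
    rw [firstGap_add, firstGap_smul, gapSum_add, gapSum_smul, ih, ih]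
    ring

theorem gapSum_deconv_end (N J : List A → ℂ) (a : A)
    (hJ : ∀ w, gapSum φ J 1 w = φ (w.prod * a)) (g : A) (w : List A) :
    gapSum φ (deconv J N) g w =
      gapSumEnd φ a N g w + N [] * (gapSum φ J g w - φ (g * w.prod * a)) := by
  induction w generalizing N g with
  | nil => simp [gapSum, gapSumEnd, deconv]; ring
  | cons c w ih =>
    simp only [gapSum, gapSumEnd, deconv]
    rw [gapSum_add, gapSum_smul, ih, ih, hJ]
    simp [mul_assoc]; ring

theorem gapSum_split (L : List A → ℂ) (g : A) (w' : List A) (c : A) (w : List A) :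
    gapSum φ L g (w' ++ c :: w) =
      gapSum φ (fun p => gapSum φ (fun q => L (p ++ c :: q)) 1 w) g w'
        + gapSumSkip φ c w L g w' := by
  induction w' generalizing L g with
  | nil => simp [gapSum, gapSumSkip, mul_comm]
  | cons d w' ih =>
    simp only [List.cons_append, gapSum, gapSumSkip]
    rw [ih, ih]; ring

theorem gapSumSkip_cons (L : List A → ℂ) (g : A) (w' : List A) (a b : A) (w : List A) :
    gapSumSkip φ a (b :: w) L g w' = gapSumSkip φ (a * b) w L g w' +
      gapSumEnd φ a (fun p => gapSum φ (fun q => L (p ++ b :: q)) 1 w) g w' := by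
  induction w' generalizing L g with
  | nil => simp [gapSum, gapSumSkip, gapSumEnd, mul_assoc]; ring
  | cons d w' ih =>
    simp only [List.cons_append, gapSumEnd, gapSumSkip]
    rw [ih, ih]; ring

theorem gapSum_top (L : List A → ℂ) (h1 : φ 1 = 1) (g : A) (w : List A)
    (h : ∀ l : List A, l.length < w.length → L l = 0) :
    gapSum φ L g w = φ g * L w := by
  induction w generalizing L g with
  | nil => simp [gapSum, mul_comm]
  | cons c w ih =>
    simp only [gapSum]
    rw [ih, ih, h1, h w (by simp)]
    · simp
    · intro l hl; exact h l (by simp; omega)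
    · intro l hl; exact h _ (by simpa using hl)

theorem gapSum_inj_zero (h1 : φ 1 = 1) (L : List A → ℂ)
    (h : ∀ w, gapSum φ L 1 w = 0) : ∀ n (l : List A), l.length = n → L l = 0 := by
  intro n
  induction n using Nat.strong_induction_on with
  | _ n ih =>
    intro l hl
    have := gapSum_top φ L h1 1 l (fun l' hl' => ih _ (hl ▸ hl') l' rfl)
    rw [h, h1, one_mul] at this
    exact this.symm

theorem gapSum_inj (h1 : φ 1 = 1) (L L' : List A → ℂ)
    (h : ∀ w, gapSum φ L 1 w = gapSum φ L' 1 w) (l : List A) : L l = L' l := by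
  have := gapSum_inj_zero φ h1 (fun q => L q + (-1) * L' q) (fun w => by
    rw [gapSum_add, gapSum_smul, h]; ring) _ l rfl
  linear_combination this

theorem deconv_eq_zero (N J : List A → ℂ) (q : List A)
    (h : ∀ q1 q2, q = q1 ++ q2 → J q1 * N q2 = 0) : deconv N J q = 0 := by
  induction q generalizing J with
  | nil => simpa [deconv, mul_comm] using h [] [] rfl
  | cons c q ih =>
    simp only [deconv]
    rw [h [] (c :: q) rfl, ih _ (fun q1 q2 hq => h (c :: q1) q2 (by simp [hq])), add_zero]

theorem deconv_eq_first (N J : List A → ℂ) (q : List A)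
    (h : ∀ q1 q2, q = q1 ++ q2 → q1 ≠ [] → J q1 * N q2 = 0) : deconv N J q = J [] * N q := by
  cases q with
  | nil => simp [deconv, mul_comm]
  | cons c q =>
    simp only [deconv]
    rw [deconv_eq_zero _ _ q (fun q1 q2 hq => h (c :: q1) q2 (by simp [hq]) (by simp)), add_zero]

theorem deconv_eq_last (N J : List A → ℂ) (q : List A)
    (h : ∀ q1 q2, q = q1 ++ q2 → q2 ≠ [] → J q1 * N q2 = 0) : deconv N J q = J q * N [] := by
  induction q generalizing J with
  | nil => simp [deconv, mul_comm]
  | cons c q ih =>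
    simp only [deconv]
    rw [h [] (c :: q) rfl (by simp), ih _ (fun q1 q2 hq => h (c :: q1) q2 (by simp [hq])), zero_add]

/-- Product formula, first position. -/
theorem product_formula_first (h1 : φ 1 = 1) (K : List A → ℂ)
    (hL : ∀ x w, φ (x * w.prod) = gapSum φ (fun q => K (x :: q)) 1 w) (a b : A) (q : List A) :
    K ((a * b) :: q) = K (a :: b :: q)
      + deconv (fun q2 => K (a :: q2)) (fun q1 => K (b :: q1)) q := by
  refine gapSum_inj φ h1 (fun q => K ((a * b) :: q)) (fun q => K (a :: b :: q)
      + deconv (fun q2 => K (a :: q2)) (fun q1 => K (b :: q1)) q) (fun w => ?_) q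
  rw [gapSum_add, gapSum_deconv, ← hL]
  have e1 := hL a (b :: w)
  simp only [gapSum] at e1
  rw [gapSum_eq_firstGap φ _ (1 * b) w, h1] at e1
  have e2 : (fun u => gapSum φ (fun q1 => K (b :: q1)) 1 u) = fun u : List A => φ (1 * b * u.prod) := by
    funext u; rw [← hL, one_mul]
  rw [e2]
  rw [mul_assoc, ← List.prod_cons, e1, one_mul]

theorem gapSum_deconv_swap (N : List A → ℂ) (J : List A → List A → ℂ) (p : List A) (g : A)
    (w : List A) : gapSum φ (fun q => deconv N (fun u => J u q) p) g w =
      deconv N (fun u => gapSum φ (J u) g w) p := by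
  induction p generalizing J with
  | nil => simp only [deconv]; rw [gapSum_smul]
  | cons c p ih =>
    simp only [deconv]
    rw [gapSum_add, ih (fun u => J (c :: u))]
    simp only [mul_comm _ (N (c :: p))]
    rw [gapSum_smul]

/-- Product formula, other positions. -/
theorem product_formula (h1 : φ 1 = 1) (K : List A → ℂ)
    (hL : ∀ x w, φ (x * w.prod) = gapSum φ (fun q => K (x :: q)) 1 w)
    (hR : ∀ x w, φ (w.prod * x) = gapSum φ (fun q => K (q ++ [x])) 1 w)
    (x a b : A) (p q : List A) :
    K (x :: p ++ (a * b) :: q) = K (x :: p ++ a :: b :: q)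
      + deconv (fun q2 => K (x :: p ++ a :: q2)) (fun q1 => K (b :: q1)) q
      + deconv (fun p2 => K (p2 ++ [a])) (fun p1 => K (x :: p1 ++ b :: q)) p := by
  refine gapSum_inj φ h1 (fun q => K (x :: p ++ (a * b) :: q)) (fun q => K (x :: p ++ a :: b :: q)
      + deconv (fun q2 => K (x :: p ++ a :: q2)) (fun q1 => K (b :: q1)) q
      + deconv (fun p2 => K (p2 ++ [a])) (fun p1 => K (x :: p1 ++ b :: q)) p) (fun w => ?_) q
  rw [gapSum_add, gapSum_add, gapSum_deconv_swap φ _ (fun p1 q => K (x :: p1 ++ b :: q))]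
  refine gapSum_inj φ h1 (fun p => gapSum φ (fun q => K (x :: p ++ (a * b) :: q)) 1 w)
    (fun p => gapSum φ (fun q => K (x :: p ++ a :: b :: q)) 1 w
      + gapSum φ (deconv (fun q2 => K (x :: p ++ a :: q2)) (fun q1 => K (b :: q1))) 1 w
      + deconv (fun p2 => K (p2 ++ [a]))
        (fun p1 => gapSum φ (fun q => K (x :: p1 ++ b :: q)) 1 w) p) (fun w' => ?_) p
  rw [gapSum_add, gapSum_add, gapSum_deconv_end φ _ _ a (fun w => (hR a w).symm), ← hR]
  have e1 := hL x (w' ++ a :: b :: w)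
  have e2 := hL x (w' ++ (a * b) :: w)
  rw [gapSum_split] at e1 e2
  rw [gapSumSkip_cons] at e1
  have e3 : (w' ++ a :: b :: w).prod = (w' ++ (a * b) :: w).prod := by simp [mul_assoc]
  rw [e3, e2] at e1
  simp only [gapSum] at e1
  have e4 : ∀ p, gapSum φ (fun q => K (x :: (p ++ a :: q))) (1 * b) w =
      gapSum φ (deconv (fun q2 => K (x :: p ++ a :: q2)) (fun q1 => K (b :: q1))) 1 w := by
    intro p
    rw [gapSum_deconv, gapSum_eq_firstGap]
    congr 1
    funext u
    rw [← hL, one_mul]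
  simp only [e4] at e1
  simp only [h1, one_mul] at e1
  rw [gapSum_add] at e1
  simp only [List.cons_append, one_mul] at e1 ⊢
  linear_combination e1

end AlgebraPart


section Conclusion

variable {A : Type*} [Ring A] [Algebra ℂ A]

/-- The functionals `κ` as a function of lists. -/
def listCum (κ : ∀ n, MultilinearMap ℂ (fun _ : Fin n => A) ℂ) (l : List A) : ℂ :=
  κ l.length l.get

theorem listCum_eq (κ : ∀ n, MultilinearMap ℂ (fun _ : Fin n => A) ℂ) (l : List A) (n : ℕ)
    (h : l.length = n) : listCum κ l = κ n (fun i => l.getD i 0) := by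
  subst h
  unfold listCum
  congr 1
  funext i
  simp

theorem listCum_ofFn (κ : ∀ n, MultilinearMap ℂ (fun _ : Fin n => A) ℂ) (n : ℕ) (a : Fin n → A) :
    listCum κ (List.ofFn a) = κ n a := by
  rw [listCum_eq κ _ n (by simp)]
  congr 1
  funext i
  simp

theorem listCum_update (κ : ∀ n, MultilinearMap ℂ (fun _ : Fin n => A) ℂ) (p q : List A) (c : A) :
    listCum κ (p ++ c :: q) = κ (p.length + (q.length + 1))
      (Function.update (fun i => (p ++ 0 :: q).getD i 0) ⟨p.length, by omega⟩ c) := by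
  rw [listCum_eq κ _ (p.length + (q.length + 1)) (by simp)]
  congr 1
  funext i
  by_cases hi : i = ⟨p.length, by omega⟩
  · subst hi; simp
  · rw [Function.update_of_ne hi]
    have : (i : ℕ) ≠ p.length := fun h => hi (Fin.ext h)
    rcases lt_or_gt_of_ne this with h | h
    · rw [List.getD_append _ _ _ _ h, List.getD_append _ _ _ _ h]
    · rw [List.getD_append_right _ _ _ _ h.le, List.getD_append_right _ _ _ _ h.le]
      obtain ⟨k, hk⟩ : ∃ k, (i : ℕ) - p.length = k + 1 := ⟨(i : ℕ) - p.length - 1, by omega⟩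
      rw [hk]; simp

theorem listCum_center (κ : ∀ n, MultilinearMap ℂ (fun _ : Fin n => A) ℂ) (p q : List A) (c : A)
    (t : ℂ) : listCum κ (p ++ (c - t • 1) :: q) =
      listCum κ (p ++ c :: q) - t * listCum κ (p ++ 1 :: q) := by
  simp only [listCum_update]
  rw [MultilinearMap.map_update_sub, MultilinearMap.map_update_smul, smul_eq_mul]

variable (φ : A →ₗ[ℂ] ℂ)

theorem cum_single (h1 : φ 1 = 1) (K : List A → ℂ)
    (hL : ∀ x w, φ (x * w.prod) = gapSum φ (fun q => K (x :: q)) 1 w) (x : A) : K [x] = φ x := by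
  have := hL x []
  simpa [gapSum, h1] using this.symm

theorem cum_one (h1 : φ 1 = 1) (K : List A → ℂ)
    (hL : ∀ x w, φ (x * w.prod) = gapSum φ (fun q => K (x :: q)) 1 w)
    (hR : ∀ x w, φ (w.prod * x) = gapSum φ (fun q => K (q ++ [x])) 1 w) :
    ∀ n (p q : List A), (p ++ 1 :: q).length = n → 2 ≤ n → K (p ++ 1 :: q) = 0 := by
  have hs := cum_single φ h1 K hL
  intro n
  induction n using Nat.strong_induction_on with
  | _ n ih =>
    intro p q hn h2
    have ih' : ∀ p' q' : List A, (p' ++ 1 :: q').length < n → 2 ≤ (p' ++ 1 :: q').length →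
        K (p' ++ 1 :: q') = 0 := fun p' q' h h' => ih _ h p' q' rfl h'
    rcases List.eq_nil_or_concat p with rfl | ⟨p, a, rfl⟩
    · cases q with
      | nil => simp at hn; omega
      | cons b q =>
        have e := product_formula_first φ h1 K hL 1 b q
        rw [deconv_eq_last, hs, h1] at e
        · simp at e; simpa using e
        · intro q1 q2 hq hq2
          have hpos := List.length_pos_of_ne_nil hq2
          have := ih' [] q2 (by subst hq; simp at hn ⊢; omega) (by simp; omega)
          simp at this
          rw [this, mul_zero]
    · rcases p with _ | ⟨x, p⟩
      · have e := product_formula_first φ h1 K hL a 1 q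
        rw [deconv_eq_first, hs, h1] at e
        · simp at e; simpa using e
        · intro q1 q2 hq hq1
          have hpos := List.length_pos_of_ne_nil hq1
          have := ih' [] q1 (by subst hq; simp at hn ⊢; omega) (by simp; omega)
          simp at this
          rw [this, zero_mul]
      · have e := product_formula φ h1 K hL hR x a 1 p q
        rw [deconv_eq_first, hs, h1, deconv_eq_zero] at e
        · simp at e; simpa using e
        · intro p1 p2 hp
          have := ih' (x :: p1) q (by subst hp; simp at hn ⊢; omega) (by simp; omega)
          rw [this, zero_mul]
        · intro q1 q2 hq hq1
          have hpos := List.length_pos_of_ne_nil hq1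
          have := ih' [] q1 (by subst hq; simp at hn ⊢; omega) (by simp; omega)
          simp at this
          rw [this, zero_mul]

theorem cum_map_center (h1 : φ 1 = 1) (κ : ∀ n, MultilinearMap ℂ (fun _ : Fin n => A) ℂ)
    (hL : ∀ x w, φ (x * w.prod) = gapSum φ (fun q => listCum κ (x :: q)) 1 w)
    (hR : ∀ x w, φ (w.prod * x) = gapSum φ (fun q => listCum κ (q ++ [x])) 1 w)
    (p q : List A) (h : 2 ≤ (p ++ q).length) :
    listCum κ (p ++ q.map (fun c => c - φ c • 1)) = listCum κ (p ++ q) := by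
  induction q generalizing p with
  | nil => simp
  | cons c q ih =>
    have e := ih (p ++ [c - φ c • 1]) (by simpa using h)
    simp only [List.append_assoc, List.singleton_append] at e
    rw [List.map_cons, e, listCum_center,
      cum_one φ h1 _ hL hR _ p q rfl (by simpa using h)]
    simp

theorem gapSum_zero (L : List A → ℂ) (g : A) (w : List A)
    (h : ∀ u v, w = u ++ v → φ (g * u.prod) = 0) : gapSum φ L g w = 0 := by
  induction w generalizing g with
  | nil => have := h [] [] rfl; simp at this; simp [gapSum, this]
  | cons c w ih =>
    have h0 := h [] (c :: w) rfl
    simp at h0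
    rw [gapSum, h0, ih]
    · simp
    · intro u v huv
      have := h (c :: u) v (by simp [huv])
      simpa [mul_assoc] using this

theorem gapSum_full (h1 : φ 1 = 1) (L : List A → ℂ) (w : List A)
    (h : ∀ s u v, w = s ++ u ++ v → u ≠ [] → φ u.prod = 0) : gapSum φ L 1 w = L w := by
  induction w generalizing L with
  | nil => simp [gapSum, h1]
  | cons c w ih =>
    rw [gapSum, h1, ih, gapSum_zero]
    · simp
    · intro u v huv
      have := h [] (c :: u) v (by simp [huv]) (by simp)
      simpa using this
    · intro s u v huv hu
      exact h (c :: s) u v (by simp [huv]) hu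

theorem freeCum_to_moment {ι : Type*} (h1 : φ 1 = 1) (K : List A → ℂ)
    (hL : ∀ x w, φ (x * w.prod) = gapSum φ (fun q => K (x :: q)) 1 w)
    (S : ι → Set A)
    (hC : ∀ l : List (ι × A), (∀ e ∈ l, e.2 ∈ S e.1) → (∃ e ∈ l, ∃ e' ∈ l, e.1 ≠ e'.1) →
      K (l.map Prod.snd) = 0) :
    ∀ n (l : List (ι × A)), l.length = n → l ≠ [] → (∀ e ∈ l, e.2 ∈ S e.1) →
      (∀ e ∈ l, φ e.2 = 0) → l.IsChain (fun e e' => e.1 ≠ e'.1) →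
      φ (l.map Prod.snd).prod = 0 := by
  intro n
  induction n using Nat.strong_induction_on with
  | _ n ih =>
    intro l hn hne hS h0 hch
    cases l with
    | nil => exact absurd rfl hne
    | cons x w =>
      rw [List.map_cons, List.prod_cons, hL, gapSum_full φ h1]
      · cases w with
        | nil => simpa [cum_single φ h1 K hL] using h0
        | cons y w =>
          apply hC (x :: y :: w) hS
          refine ⟨x, by simp, y, by simp, ?_⟩
          rw [List.isChain_cons_cons] at hch
          exact hch.1
      · intro s u v hw hu
        obtain ⟨su, v', rfl, hsu, rfl⟩ := List.map_eq_append_iff.1 hw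
        obtain ⟨s', u', rfl, rfl, rfl⟩ := List.map_eq_append_iff.1 hsu
        refine ih _ ?_ u' rfl (by simpa using hu) ?_ ?_ ?_
        · simp at hn; omega
        · intro e he; exact hS e (by simp [he])
        · intro e he; exact h0 e (by simp [he])
        · refine hch.infix ⟨x :: s', v', by simp⟩

theorem not_chain {β : Type*} (R : β → β → Prop) (l : List β) (h : ¬ l.IsChain R) :
    ∃ p a b q, l = p ++ a :: b :: q ∧ ¬ R a b := by
  induction l with
  | nil => simp at h
  | cons x l ih =>
    cases l with
    | nil => simp at h
    | cons y l =>
      by_cases hxy : R x y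
      · have : ¬ (y :: l).IsChain R := fun h' => h (List.isChain_cons_cons.2 ⟨hxy, h'⟩)
        obtain ⟨p, a, b, q, e, hab⟩ := ih this
        exact ⟨x :: p, a, b, q, by simp [e], hab⟩
      · exact ⟨[], x, y, l, rfl, hxy⟩

theorem freeMoment_to_cum {ι : Type*} (h1 : φ 1 = 1)
    (κ : ∀ n, MultilinearMap ℂ (fun _ : Fin n => A) ℂ)
    (hL : ∀ x w, φ (x * w.prod) = gapSum φ (fun q => listCum κ (x :: q)) 1 w)
    (hR : ∀ x w, φ (w.prod * x) = gapSum φ (fun q => listCum κ (q ++ [x])) 1 w)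
    (Alg : ι → Subalgebra ℂ A)
    (hM : ∀ (l : List (ι × A)), l ≠ [] → (∀ e ∈ l, e.2 ∈ Alg e.1) →
      (∀ e ∈ l, φ e.2 = 0) → l.IsChain (fun e e' => e.1 ≠ e'.1) →
      φ (l.map Prod.snd).prod = 0) :
    ∀ n (l : List (ι × A)), l.length = n → (∀ e ∈ l, e.2 ∈ Alg e.1) →
      (∃ e ∈ l, ∃ e' ∈ l, e.1 ≠ e'.1) → listCum κ (l.map Prod.snd) = 0 := by
  intro n
  induction n using Nat.strong_induction_on with
  | _ n ih =>
    intro l hn hS hmix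
    have hlen : 2 ≤ l.length := by
      obtain ⟨e, he, e', he', hne⟩ := hmix
      match l, he, he' with
      | [z], he, he' => simp at he he'; subst he; subst he'; exact absurd rfl hne
      | _ :: _ :: _, _, _ => simp
    by_cases hch : l.IsChain (fun e e' => e.1 ≠ e'.1)
    · have e0 := cum_map_center φ h1 κ hL hR [] (l.map Prod.snd) (by simpa using hlen)
      simp only [List.nil_append] at e0
      rw [← e0]
      set l' : List (ι × A) := l.map (fun e => (e.1, e.2 - φ e.2 • (1 : A))) with hl'
      have e1 : (l.map Prod.snd).map (fun c => c - φ c • (1 : A)) = l'.map Prod.snd := by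
        simp [hl']
      have hS' : ∀ e ∈ l', e.2 ∈ Alg e.1 := by
        intro e he
        obtain ⟨d, hd, rfl⟩ := List.mem_map.1 he
        exact sub_mem (hS d hd) (Subalgebra.smul_mem _ (one_mem _) _)
      have h0' : ∀ e ∈ l', φ e.2 = 0 := by
        intro e he
        obtain ⟨d, hd, rfl⟩ := List.mem_map.1 he
        simp [h1]
      have hch' : l'.IsChain (fun e e' => e.1 ≠ e'.1) := by
        rw [hl', List.isChain_map]; exact hch
      rw [e1]
      have hne' : l' ≠ [] := by
        intro h; rw [hl'] at h; simp at h; simp [h] at hlen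
      have key := hM l' hne' hS' h0' hch'
      clear_value l'
      cases l' with
      | nil => exact absurd rfl hne'
      | cons x w =>
        rw [List.map_cons, List.prod_cons, hL, gapSum_full φ h1] at key
        · exact key
        · intro s u v hw hu
          obtain ⟨su, v', rfl, hsu, rfl⟩ := List.map_eq_append_iff.1 hw
          obtain ⟨s', u', rfl, rfl, rfl⟩ := List.map_eq_append_iff.1 hsu
          refine hM u' (by simpa using hu) ?_ ?_ ?_
          · intro e he; exact hS' e (by simp [he])
          · intro e he; exact h0' e (by simp [he])
          · exact hch'.infix ⟨x :: s', v', by simp⟩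
    · obtain ⟨p, ⟨i, a⟩, ⟨j, b⟩, q, rfl, hab⟩ := not_chain _ _ hch
      simp only [ne_eq, not_not] at hab
      subst hab
      -- merged word
      have hmerge : listCum κ ((p ++ (i, a * b) :: q).map Prod.snd) = 0 := by
        refine ih _ ?_ _ rfl ?_ ?_
        · simp at hn ⊢; omega
        · intro e he
          simp only [List.mem_append, List.mem_cons] at he
          rcases he with he | rfl | he
          · exact hS e (by simp [he])
          · exact mul_mem (hS (i, a) (by simp)) (hS (i, b) (by simp))
          · exact hS e (by simp [he])
        · by_contra hcon
          push Not at hcon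
          have hi : ∀ e ∈ p ++ (i, a * b) :: q, e.1 = i := fun e he =>
            hcon e he (i, a * b) (by simp)
          have hi' : ∀ e ∈ p ++ (i, a) :: (i, b) :: q, e.1 = i := by
            intro e he
            simp only [List.mem_append, List.mem_cons] at he
            rcases he with he | rfl | rfl | he
            · exact hi e (by simp [he])
            · rfl
            · rfl
            · exact hi e (by simp [he])
          obtain ⟨e, he, e', he', hne⟩ := hmix
          exact hne ((hi' e he).trans (hi' e' he').symm)
      -- a product of two shorter cumulants vanishes
      have hprod : ∀ l1 l2 : List (ι × A), l1.length < n → l2.length < n →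
          (i, a) ∈ l1 → (i, b) ∈ l2 →
          (∀ e, e ∈ p ++ (i, a) :: (i, b) :: q ↔ e ∈ l1 ∨ e ∈ l2) →
          listCum κ (l1.map Prod.snd) = 0 ∨ listCum κ (l2.map Prod.snd) = 0 := by
        intro l1 l2 hl1 hl2 ha hb hiff
        by_contra hcon
        push Not at hcon
        have c1 : ∀ e ∈ l1, e.1 = i := by
          intro e he
          by_contra hne
          exact hcon.1 (ih _ hl1 l1 rfl (fun e he => hS e ((hiff e).2 (Or.inl he)))
            ⟨e, he, _, ha, hne⟩)
        have c2 : ∀ e ∈ l2, e.1 = i := by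
          intro e he
          by_contra hne
          exact hcon.2 (ih _ hl2 l2 rfl (fun e he => hS e ((hiff e).2 (Or.inr he)))
            ⟨e, he, _, hb, hne⟩)
        have c3 : ∀ e ∈ p ++ (i, a) :: (i, b) :: q, e.1 = i := fun e he =>
          ((hiff e).1 he).elim (c1 e) (c2 e)
        obtain ⟨e, he, e', he', hne⟩ := hmix
        exact hne ((c3 e he).trans (c3 e' he').symm)
      have hd1 : deconv (fun q2 => listCum κ (p.map Prod.snd ++ a :: q2))
          (fun q1 => listCum κ (b :: q1)) (q.map Prod.snd) = 0 := by
        refine deconv_eq_zero _ _ _ (fun q1 q2 hq => ?_)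
        obtain ⟨q1, q2, rfl, rfl, rfl⟩ := List.map_eq_append_iff.1 hq
        rcases hprod (p ++ (i, a) :: q2) ((i, b) :: q1) (by simp at hn ⊢; omega)
          (by simp at hn ⊢; omega) (by simp) (by simp)
          (by intro e; simp only [List.mem_append, List.mem_cons]; tauto) with h | h
        · simp at h; simp [h]
        · simp at h; simp [h]
      cases p with
      | nil =>
        have e := product_formula_first φ h1 _ hL a b (q.map Prod.snd)
        simp at hmerge hd1 ⊢
        rw [hd1, hmerge] at e
        simpa using e.symm
      | cons x p =>
        have e := product_formula φ h1 _ hL hR x.2 a b (p.map Prod.snd) (q.map Prod.snd)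
        have hd2 : deconv (fun p2 => listCum κ (p2 ++ [a]))
            (fun p1 => listCum κ (x.2 :: p1 ++ b :: q.map Prod.snd)) (p.map Prod.snd) = 0 := by
          refine deconv_eq_zero _ _ _ (fun p1 p2 hp => ?_)
          obtain ⟨p1, p2, rfl, rfl, rfl⟩ := List.map_eq_append_iff.1 hp
          rcases hprod (p2 ++ [(i, a)]) (x :: p1 ++ (i, b) :: q) (by simp at hn ⊢; omega)
            (by simp at hn ⊢; omega) (by simp) (by simp)
            (by intro e; simp only [List.mem_append, List.mem_cons]; simp; tauto) with h | h
          · simp at h; simp [h]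
          · simp at h; simp [h]
        rw [hd2] at e
        simp at hmerge hd1 e ⊢
        rw [hd1, hmerge] at e
        simpa using e.symm

end Conclusion


section Combinatorics

/-- Non-crossing partitions of a finite set of naturals, as sets of blocks. -/
structure IsNCSet (S : Finset ℕ) (π : Finset (Finset ℕ)) : Prop where
  ne : ∀ B ∈ π, B.Nonempty
  cover : ∀ x, x ∈ S ↔ ∃ B ∈ π, x ∈ B
  uniq : ∀ x, ∀ B ∈ π, ∀ C ∈ π, x ∈ B → x ∈ C → B = C
  nc : ∀ p q r s, p < q → q < r → r < s → ∀ B ∈ π, ∀ C ∈ π,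
    p ∈ B → r ∈ B → q ∈ C → s ∈ C → B = C

/-- No block has elements on both sides of an element of `V`. -/
def CutBy (V : Finset ℕ) (π : Finset (Finset ℕ)) : Prop :=
  ∀ B ∈ π, ∀ c ∈ B, ∀ d ∈ B, ∀ v ∈ V, c < v → v < d → False

open Classical in
/-- Non-crossing partitions of `S` cut by `V`. -/
noncomputable def ncSet (S V : Finset ℕ) : Finset (Finset (Finset ℕ)) :=
  S.powerset.powerset.filter (fun π => IsNCSet S π ∧ CutBy V π)

theorem mem_ncSet (S V : Finset ℕ) (π : Finset (Finset ℕ)) :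
    π ∈ ncSet S V ↔ IsNCSet S π ∧ CutBy V π := by
  simp only [ncSet, Finset.mem_filter, and_iff_right_iff_imp]
  rintro ⟨h, -⟩
  rw [Finset.mem_powerset]
  intro B hB
  rw [Finset.mem_powerset]
  intro x hx
  exact (h.cover x).2 ⟨B, hB, hx⟩

/-- Sum over cut non-crossing partitions. -/
noncomputable def ncSum (k : Finset ℕ → ℂ) (S V : Finset ℕ) : ℂ :=
  ∑ π ∈ ncSet S V, ∏ B ∈ π, k B

theorem ncSum_congr_cut (k : Finset ℕ → ℂ) (S V V' : Finset ℕ)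
    (h : ∀ c ∈ S, ∀ d ∈ S, ∀ v, c < v → v < d → (v ∈ V ↔ v ∈ V')) :
    ncSum k S V = ncSum k S V' := by
  unfold ncSum
  congr 1
  ext π
  rw [mem_ncSet, mem_ncSet, and_congr_right_iff]
  intro hπ
  have hm : ∀ B ∈ π, ∀ x ∈ B, x ∈ S := fun B hB x hx => (hπ.cover x).2 ⟨B, hB, hx⟩
  constructor
  · intro H B hB c hc d hd v hv h1 h2
    exact H B hB c hc d hd v ((h c (hm B hB c hc) d (hm B hB d hd) v h1 h2).2 hv) h1 h2
  · intro H B hB c hc d hd v hv h1 h2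
    exact H B hB c hc d hd v ((h c (hm B hB c hc) d (hm B hB d hd) v h1 h2).1 hv) h1 h2

theorem ncSum_split (k : Finset ℕ → ℂ) (S V : Finset ℕ) (v : ℕ) (hvS : v ∉ S) (hvV : v ∈ V) :
    ncSum k S V = ncSum k (S.filter (· < v)) V * ncSum k (S.filter (v < ·)) V := by
  unfold ncSum
  rw [Finset.sum_mul_sum, ← Finset.sum_product']
  symm
  refine Finset.sum_bij' (fun x _ => x.1 ∪ x.2)
    (fun π _ => (π.filter (fun B => ∀ x ∈ B, x < v), π.filter (fun B => ∀ x ∈ B, v < x)))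
    ?_ ?_ ?_ ?_ ?_
  · rintro ⟨π1, π2⟩ hx
    simp only [Finset.mem_product, mem_ncSet] at hx
    obtain ⟨⟨h1, c1⟩, h2, c2⟩ := hx
    have m1 : ∀ B ∈ π1, ∀ x ∈ B, x ∈ S ∧ x < v := fun B hB x hx => by
      simpa using (h1.cover x).2 ⟨B, hB, hx⟩
    have m2 : ∀ B ∈ π2, ∀ x ∈ B, x ∈ S ∧ v < x := fun B hB x hx => by
      simpa using (h2.cover x).2 ⟨B, hB, hx⟩
    rw [mem_ncSet]
    refine ⟨⟨?_, ?_, ?_, ?_⟩, ?_⟩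
    · intro B hB
      rcases Finset.mem_union.1 hB with hB | hB
      · exact h1.ne B hB
      · exact h2.ne B hB
    · intro x
      constructor
      · intro hx
        rcases lt_trichotomy x v with hlt | rfl | hgt
        · obtain ⟨B, hB, hxB⟩ := (h1.cover x).1 (by simp [hx, hlt])
          exact ⟨B, by simp [hB], hxB⟩
        · exact absurd hx hvS
        · obtain ⟨B, hB, hxB⟩ := (h2.cover x).1 (by simp [hx, hgt])
          exact ⟨B, by simp [hB], hxB⟩
      · rintro ⟨B, hB, hx⟩
        rcases Finset.mem_union.1 hB with hB | hB
        · exact (m1 B hB x hx).1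
        · exact (m2 B hB x hx).1
    · intro x B hB C hC hxB hxC
      rcases Finset.mem_union.1 hB with hB | hB <;> rcases Finset.mem_union.1 hC with hC | hC
      · exact h1.uniq x B hB C hC hxB hxC
      · have := (m1 B hB x hxB).2; have := (m2 C hC x hxC).2; omega
      · have := (m2 B hB x hxB).2; have := (m1 C hC x hxC).2; omega
      · exact h2.uniq x B hB C hC hxB hxC
    · intro p q r s hpq hqr hrs B hB C hC hp hr hq hs
      rcases Finset.mem_union.1 hB with hB | hB <;> rcases Finset.mem_union.1 hC with hC | hC
      · exact h1.nc p q r s hpq hqr hrs B hB C hC hp hr hq hs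
      · have := (m1 B hB r hr).2; have := (m2 C hC q hq).2; omega
      · have := (m2 B hB p hp).2; have := (m1 C hC q hq).2; omega
      · exact h2.nc p q r s hpq hqr hrs B hB C hC hp hr hq hs
    · intro B hB
      rcases Finset.mem_union.1 hB with hB | hB
      · exact c1 B hB
      · exact c2 B hB
  · intro π hπ
    rw [mem_ncSet] at hπ
    obtain ⟨h, c⟩ := hπ
    have side : ∀ B ∈ π, ∀ x ∈ B, (x < v → ∀ y ∈ B, y < v) ∧ (v < x → ∀ y ∈ B, v < y) := by
      intro B hB x hx
      have hne : ∀ y ∈ B, y ≠ v := by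
        rintro y hy rfl
        exact hvS ((h.cover y).2 ⟨B, hB, hy⟩)
      refine ⟨fun hlt y hy => ?_, fun hlt y hy => ?_⟩
      · have := hne y hy
        by_contra hcon
        exact c B hB x hx y hy v hvV hlt (by omega)
      · have := hne y hy
        by_contra hcon
        exact c B hB y hy x hx v hvV (by omega) hlt
    simp only [Finset.mem_product, mem_ncSet]
    refine ⟨⟨⟨?_, ?_, ?_, ?_⟩, ?_⟩, ⟨⟨?_, ?_, ?_, ?_⟩, ?_⟩⟩
    · intro B hB; exact h.ne B (Finset.mem_filter.1 hB).1
    · intro x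
      simp only [Finset.mem_filter]
      constructor
      · rintro ⟨hx, hlt⟩
        obtain ⟨B, hB, hxB⟩ := (h.cover x).1 hx
        exact ⟨B, ⟨hB, (side B hB x hxB).1 hlt⟩, hxB⟩
      · rintro ⟨B, ⟨hB, hlt⟩, hxB⟩
        exact ⟨(h.cover x).2 ⟨B, hB, hxB⟩, hlt x hxB⟩
    · intro x B hB C hC
      exact h.uniq x B (Finset.mem_filter.1 hB).1 C (Finset.mem_filter.1 hC).1
    · intro p q r s h1 h2 h3 B hB C hC
      exact h.nc p q r s h1 h2 h3 B (Finset.mem_filter.1 hB).1 C (Finset.mem_filter.1 hC).1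
    · intro B hB; exact c B (Finset.mem_filter.1 hB).1
    · intro B hB; exact h.ne B (Finset.mem_filter.1 hB).1
    · intro x
      simp only [Finset.mem_filter]
      constructor
      · rintro ⟨hx, hlt⟩
        obtain ⟨B, hB, hxB⟩ := (h.cover x).1 hx
        exact ⟨B, ⟨hB, (side B hB x hxB).2 hlt⟩, hxB⟩
      · rintro ⟨B, ⟨hB, hlt⟩, hxB⟩
        exact ⟨(h.cover x).2 ⟨B, hB, hxB⟩, hlt x hxB⟩
    · intro x B hB C hC
      exact h.uniq x B (Finset.mem_filter.1 hB).1 C (Finset.mem_filter.1 hC).1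
    · intro p q r s h1 h2 h3 B hB C hC
      exact h.nc p q r s h1 h2 h3 B (Finset.mem_filter.1 hB).1 C (Finset.mem_filter.1 hC).1
    · intro B hB; exact c B (Finset.mem_filter.1 hB).1
  · rintro ⟨π1, π2⟩ hx
    simp only [Finset.mem_product, mem_ncSet] at hx
    obtain ⟨⟨h1, c1⟩, h2, c2⟩ := hx
    have m1 : ∀ B ∈ π1, ∀ x ∈ B, x ∈ S ∧ x < v := fun B hB x hx => by
      simpa using (h1.cover x).2 ⟨B, hB, hx⟩
    have m2 : ∀ B ∈ π2, ∀ x ∈ B, x ∈ S ∧ v < x := fun B hB x hx => by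
      simpa using (h2.cover x).2 ⟨B, hB, hx⟩
    ext B
    · simp only [Finset.mem_filter, Finset.mem_union]
      constructor
      · rintro ⟨hB | hB, hlt⟩
        · exact hB
        · obtain ⟨x, hx⟩ := h2.ne B hB
          have := hlt x hx; have := (m2 B hB x hx).2; omega
      · intro hB; exact ⟨Or.inl hB, fun x hx => (m1 B hB x hx).2⟩
    · simp only [Finset.mem_filter, Finset.mem_union]
      constructor
      · rintro ⟨hB | hB, hlt⟩
        · obtain ⟨x, hx⟩ := h1.ne B hB
          have := hlt x hx; have := (m1 B hB x hx).2; omega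
        · exact hB
      · intro hB; exact ⟨Or.inr hB, fun x hx => (m2 B hB x hx).2⟩
  · intro π hπ
    rw [mem_ncSet] at hπ
    obtain ⟨h, c⟩ := hπ
    ext B
    simp only [Finset.mem_filter, Finset.mem_union]
    constructor
    · rintro (hB | hB) <;> exact hB.1
    · intro hB
      obtain ⟨x, hx⟩ := h.ne B hB
      have hne : ∀ y ∈ B, y ≠ v := by
        rintro y hy rfl
        exact hvS ((h.cover y).2 ⟨B, hB, hy⟩)
      rcases lt_or_gt_of_ne (hne x hx) with hlt | hlt
      · left
        refine ⟨hB, fun y hy => ?_⟩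
        have := hne y hy
        by_contra hcon
        exact c B hB x hx y hy v hvV hlt (by omega)
      · right
        refine ⟨hB, fun y hy => ?_⟩
        have := hne y hy
        by_contra hcon
        exact c B hB y hy x hx v hvV (by omega) hlt
  · rintro ⟨π1, π2⟩ hx
    simp only [Finset.mem_product, mem_ncSet] at hx
    obtain ⟨⟨h1, c1⟩, h2, c2⟩ := hx
    rw [Finset.prod_union]
    rw [Finset.disjoint_left]
    intro B hB hB'
    obtain ⟨x, hx⟩ := h1.ne B hB
    have e1 := (h1.cover x).2 ⟨B, hB, hx⟩
    have e2 := (h2.cover x).2 ⟨B, hB', hx⟩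
    simp at e1 e2
    omega

theorem ncSum_block (k : Finset ℕ → ℂ) (S : Finset ℕ) (x : ℕ) (hxS : x ∈ S)
    (hext : (∀ y ∈ S, x ≤ y) ∨ (∀ y ∈ S, y ≤ x)) :
    ncSum k S ∅ = ∑ V ∈ (S.erase x).powerset,
      k (insert x V) * ncSum k ((S.erase x) \ V) V := by
  unfold ncSum
  simp only [Finset.mul_sum]
  rw [Finset.sum_sigma']
  symm
  have key : ∀ V ⊆ S.erase x, ∀ π ∈ ncSet ((S.erase x) \ V) V,
      insert x V ∉ π ∧ (∀ B ∈ π, x ∉ B) := by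
    intro V hV π hπ
    rw [mem_ncSet] at hπ
    have : ∀ B ∈ π, x ∉ B := by
      intro B hB hx
      have := (hπ.1.cover x).2 ⟨B, hB, hx⟩
      simp at this
    exact ⟨fun h => this _ h (Finset.mem_insert_self _ _), this⟩
  refine Finset.sum_bij (fun z _ => insert (insert x z.1) z.2) ?_ ?_ ?_ ?_
  · rintro ⟨V, π⟩ hz
    simp only [Finset.mem_sigma, Finset.mem_powerset] at hz
    obtain ⟨hV, hπ⟩ := hz
    rw [mem_ncSet] at hπ
    obtain ⟨h, c⟩ := hπ
    have hm : ∀ B ∈ π, ∀ y ∈ B, y ∈ S ∧ y ≠ x ∧ y ∉ V := by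
      intro B hB y hy
      have := (h.cover y).2 ⟨B, hB, hy⟩
      simp at this; tauto
    have hV' : ∀ y ∈ insert x V, y ∈ S := by
      intro y hy
      rcases Finset.mem_insert.1 hy with rfl | hy
      · exact hxS
      · exact Finset.mem_of_mem_erase (hV hy)
    rw [mem_ncSet]
    refine ⟨⟨?_, ?_, ?_, ?_⟩, ?_⟩
    · intro B hB
      rcases Finset.mem_insert.1 hB with rfl | hB
      · exact ⟨x, by simp⟩
      · exact h.ne B hB
    · intro y
      constructor
      · intro hy
        by_cases hyV : y ∈ insert x V
        · exact ⟨_, Finset.mem_insert_self _ _, hyV⟩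
        · obtain ⟨B, hB, hyB⟩ := (h.cover y).1 (by simp at hyV ⊢; tauto)
          exact ⟨B, Finset.mem_insert_of_mem hB, hyB⟩
      · rintro ⟨B, hB, hy⟩
        rcases Finset.mem_insert.1 hB with rfl | hB
        · exact hV' y hy
        · exact (hm B hB y hy).1
    · intro y B hB C hC hyB hyC
      rcases Finset.mem_insert.1 hB with rfl | hB <;> rcases Finset.mem_insert.1 hC with rfl | hC
      · rfl
      · have := hm C hC y hyC; simp at hyB; tauto
      · have := hm B hB y hyB; simp at hyC; tauto
      · exact h.uniq y B hB C hC hyB hyC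
    · intro p q r s hpq hqr hrs B hB0 C hC0 hp hr0 hq0 hs
      rcases Finset.mem_insert.1 hB0 with rfl | hB <;> rcases Finset.mem_insert.1 hC0 with rfl | hC
      · rfl
      · exfalso
        rcases Finset.mem_insert.1 hr0 with rfl | hr
        · rcases hext with hext | hext
          · have := hext p (hV' p hp); omega
          · have := hext s (hm C hC s hs).1; omega
        · exact c C hC q hq0 s hs r hr hqr hrs
      · exfalso
        rcases Finset.mem_insert.1 hq0 with rfl | hq
        · rcases hext with hext | hext
          · have := hext p (hm B hB p hp).1; omega
          · have := hext s (hV' s hs); omega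
        · exact c B hB p hp r hr0 q hq hpq hqr
      · exact h.nc p q r s hpq hqr hrs B hB C hC hp hr0 hq0 hs
    · intro B _ c _ d _ v hv
      simp at hv
  · rintro ⟨V, π⟩ hz ⟨V', π'⟩ hz' heq
    simp only [Finset.mem_sigma, Finset.mem_powerset] at hz hz'
    obtain ⟨n1, n2⟩ := key V hz.1 π hz.2
    obtain ⟨n1', n2'⟩ := key V' hz'.1 π' hz'.2
    simp only at heq
    have e1 : insert x V = insert x V' := by
      have : insert x V ∈ insert (insert x V') π' := heq ▸ Finset.mem_insert_self _ _
      rcases Finset.mem_insert.1 this with h | h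
      · exact h
      · exact absurd (Finset.mem_insert_self _ _) (n2' _ h)
    have x1 : x ∉ V := fun h => by simpa using hz.1 h
    have x2 : x ∉ V' := fun h => by simpa using hz'.1 h
    have e2 : V = V' := by
      rw [← Finset.erase_insert x1, e1, Finset.erase_insert x2]
    subst e2
    have e3 : π = π' := by
      rw [← Finset.erase_insert n1, heq, Finset.erase_insert n1']
    subst e3
    rfl
  · intro π hπ
    rw [mem_ncSet] at hπ
    obtain ⟨h, -⟩ := hπ
    obtain ⟨B, hB, hxB⟩ := (h.cover x).1 hxS
    have eB : insert x (B.erase x) = B := Finset.insert_erase hxB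
    refine ⟨⟨B.erase x, π.erase B⟩, ?_, ?_⟩
    · simp only [Finset.mem_sigma, Finset.mem_powerset, mem_ncSet]
      refine ⟨?_, ⟨?_, ?_, ?_, ?_⟩, ?_⟩
      · exact Finset.erase_subset_erase _ (fun y hy => (h.cover y).2 ⟨B, hB, hy⟩)
      · intro C hC; exact h.ne C (Finset.mem_of_mem_erase hC)
      · intro y
        constructor
        · intro hy
          simp only [Finset.mem_sdiff, Finset.mem_erase] at hy
          obtain ⟨C, hC, hyC⟩ := (h.cover y).1 hy.1.2
          refine ⟨C, Finset.mem_erase.2 ⟨?_, hC⟩, hyC⟩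
          rintro rfl
          exact hy.2 ⟨hy.1.1, hyC⟩
        · rintro ⟨C, hC, hyC⟩
          obtain ⟨hne, hC⟩ := Finset.mem_erase.1 hC
          have hyB : y ∉ B := fun hyB => hne (h.uniq y C hC B hB hyC hyB)
          have hyx : y ≠ x := by rintro rfl; exact hyB hxB
          simp only [Finset.mem_sdiff, Finset.mem_erase]
          exact ⟨⟨hyx, (h.cover y).2 ⟨C, hC, hyC⟩⟩, fun hh => hyB hh.2⟩
      · intro y C hC D hD
        exact h.uniq y C (Finset.mem_of_mem_erase hC) D (Finset.mem_of_mem_erase hD)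
      · intro p q r s h1 h2 h3 C hC D hD
        exact h.nc p q r s h1 h2 h3 C (Finset.mem_of_mem_erase hC) D (Finset.mem_of_mem_erase hD)
      · intro C hC c hc d hd v hv hcv hvd
        obtain ⟨hne, hC⟩ := Finset.mem_erase.1 hC
        have hvB := Finset.mem_of_mem_erase hv
        have hcx : c ≠ x := by rintro rfl; exact hne (h.uniq c C hC B hB hc hxB)
        have hdx : d ≠ x := by rintro rfl; exact hne (h.uniq d C hC B hB hd hxB)
        rcases hext with hext | hext
        · have := hext c ((h.cover c).2 ⟨C, hC, hc⟩)
          exact hne (h.nc x c v d (by omega) hcv hvd B hB C hC hxB hvB hc hd).symm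
        · have := hext d ((h.cover d).2 ⟨C, hC, hd⟩)
          exact hne (h.nc c v d x hcv hvd (by omega) C hC B hB hc hd hvB hxB)
    · simp only [eB]
      exact Finset.insert_erase hB
  · rintro ⟨V, π⟩ hz
    simp only [Finset.mem_sigma, Finset.mem_powerset] at hz
    rw [Finset.prod_insert (key V hz.1 π hz.2).1]

theorem ncSum_empty (k : Finset ℕ → ℂ) (V : Finset ℕ) : ncSum k ∅ V = 1 := by
  have : ncSet ∅ V = {∅} := by
    ext π
    rw [mem_ncSet, Finset.mem_singleton]
    constructor
    · rintro ⟨h, -⟩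
      rw [Finset.eq_empty_iff_forall_notMem]
      intro B hB
      obtain ⟨x, hx⟩ := h.ne B hB
      simpa using (h.cover x).2 ⟨B, hB, hx⟩
    · rintro rfl
      exact ⟨⟨by simp, by simp, by simp, by simp⟩, by intro B hB; simp at hB⟩
  simp [ncSum, this]

end Combinatorics


section Bridge

variable {A : Type*} [Ring A] [Algebra ℂ A]

/-- weight of a block -/
noncomputable def blockCum (κ : ∀ n, MultilinearMap ℂ (fun _ : Fin n => A) ℂ) (a : ℕ → A)
    (B : Finset ℕ) : ℂ := listCum κ ((B.sort (· ≤ ·)).map a)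

/-- the word on an interval -/
def word (a : ℕ → A) (l r : ℕ) : List A := (List.range' l (r - l)).map a

theorem ncSum_Ico (φ : A →ₗ[ℂ] ℂ) (h1 : φ 1 = 1)
    (κ : ∀ n, MultilinearMap ℂ (fun _ : Fin n => A) ℂ)
    (hκ : MomentCumulant φ κ) (a : ℕ → A) (l n : ℕ) :
    ncSum (blockCum κ a) (Finset.Ico l (l + n)) ∅ = φ (word a l (l + n)).prod := by
  classical
  rcases Nat.eq_zero_or_pos n with rfl | hn
  · simp [ncSum_empty, word, h1]
  let e : Fin n ↪ ℕ := ⟨fun j => l + j, fun i j h => Fin.ext (by simpa using h)⟩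
  have he : ∀ j, e j = l + j := fun j => rfl
  have hlt : ∀ i j : Fin n, e i < e j ↔ i < j := fun i j => by simp [he]
  have hw : word a l (l + n) = List.ofFn (fun j : Fin n => a (e j)) := by
    apply List.ext_getElem
    · simp [word]
    · intro i h1 h2; simp [word, he]
  rw [hw, hκ n hn]
  unfold ncSum
  symm
  refine Finset.sum_bij (fun π _ => π.parts.map (Finset.mapEmbedding e).toEmbedding) ?_ ?_ ?_ ?_
  · intro π hπ
    have hnc : IsNonCrossing π := (Finset.mem_filter.1 hπ).2
    rw [mem_ncSet]
    refine ⟨⟨?_, ?_, ?_, ?_⟩, ?_⟩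
    · intro B hB0
      obtain ⟨B, hB, rfl⟩ := Finset.mem_map.1 hB0
      simpa using π.nonempty_of_mem_parts hB
    · intro x
      constructor
      · intro hx
        rw [Finset.mem_Ico] at hx
        obtain ⟨B, hB, hxB⟩ := π.exists_mem (Finset.mem_univ (⟨x - l, by omega⟩ : Fin n))
        refine ⟨B.map e, Finset.mem_map.2 ⟨B, hB, rfl⟩, Finset.mem_map.2 ⟨_, hxB, ?_⟩⟩
        simp [he]; omega
      · rintro ⟨B, hB0, hx⟩
        obtain ⟨B, hB, rfl⟩ := Finset.mem_map.1 hB0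
        obtain ⟨j, hj, rfl⟩ := Finset.mem_map.1 hx
        have := j.2
        simp [he]
    · intro x B hB0 C hC0 hxB hxC
      obtain ⟨B, hB, rfl⟩ := Finset.mem_map.1 hB0
      obtain ⟨C, hC, rfl⟩ := Finset.mem_map.1 hC0
      obtain ⟨j, hj, rfl⟩ := Finset.mem_map.1 hxB
      have hj' : j ∈ C := (Finset.mem_map' e).1 hxC
      rw [π.eq_of_mem_parts hB hC hj hj']
    · intro p q r s hpq hqr hrs B hB0 C hC0 hp hr hq hs
      obtain ⟨B, hB, rfl⟩ := Finset.mem_map.1 hB0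
      obtain ⟨C, hC, rfl⟩ := Finset.mem_map.1 hC0
      obtain ⟨p, hp', rfl⟩ := Finset.mem_map.1 hp
      obtain ⟨q, hq', rfl⟩ := Finset.mem_map.1 hq
      obtain ⟨r, hr', rfl⟩ := Finset.mem_map.1 hr
      obtain ⟨s, hs', rfl⟩ := Finset.mem_map.1 hs
      rw [hlt] at hpq hqr hrs
      rw [hnc p q r s hpq hqr hrs B hB C hC hp' hr' hq' hs']
    · intro B _ c _ d _ v hv
      simp at hv
  · intro π _ π' _ h
    exact Finpartition.ext (Finset.map_injective _ h)
  · intro σ hσ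
    rw [mem_ncSet] at hσ
    obtain ⟨h, -⟩ := hσ
    have hpre : ∀ C ∈ σ, ∃ B : Finset (Fin n), B.map e = C := by
      intro C hC
      refine ⟨Finset.univ.filter (fun j => e j ∈ C), ?_⟩
      ext x
      simp only [Finset.mem_map, Finset.mem_filter, Finset.mem_univ, true_and]
      constructor
      · rintro ⟨j, hj, rfl⟩; exact hj
      · intro hx
        have := (h.cover x).2 ⟨C, hC, hx⟩
        rw [Finset.mem_Ico] at this
        have hh : e ⟨x - l, by omega⟩ = x := by simp [he]; omega
        exact ⟨⟨x - l, by omega⟩, by rw [hh]; exact hx, hh⟩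
    let P : Finset (Finset (Fin n)) := Finset.univ.filter (fun B => B.map e ∈ σ)
    have hP : ∀ B, B ∈ P ↔ B.map e ∈ σ := fun B => by simp [P]
    let π : Finpartition (Finset.univ : Finset (Fin n)) :=
      Finpartition.ofExistsUnique P (fun p _ => Finset.subset_univ p)
        (by
          intro j _
          obtain ⟨C, hC, hjC⟩ := (h.cover (e j)).1 (by have := j.2; simp [he])
          obtain ⟨B, rfl⟩ := hpre C hC
          refine ⟨B, ⟨(hP B).2 hC, (Finset.mem_map' e).1 hjC⟩, ?_⟩
          rintro B' ⟨hB', hj'⟩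
          exact Finset.map_injective e
            (h.uniq (e j) _ ((hP B').1 hB') _ hC ((Finset.mem_map' e).2 hj') hjC))
        (by
          intro h0
          have := h.ne _ ((hP _).1 h0)
          simp at this)
    have hπ : ∀ B, B ∈ π.parts ↔ B.map e ∈ σ := hP
    refine ⟨π, Finset.mem_filter.2 ⟨Finset.mem_univ _, ?_⟩, ?_⟩
    · intro p q r s hpq hqr hrs B hB C hC hp hr hq hs
      apply Finset.map_injective e
      exact h.nc (e p) (e q) (e r) (e s) ((hlt _ _).2 hpq) ((hlt _ _).2 hqr) ((hlt _ _).2 hrs)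
        _ ((hπ B).1 hB) _ ((hπ C).1 hC) ((Finset.mem_map' e).2 hp) ((Finset.mem_map' e).2 hr)
        ((Finset.mem_map' e).2 hq) ((Finset.mem_map' e).2 hs)
    · ext C
      rw [Finset.mem_map]
      constructor
      · rintro ⟨B, hB, rfl⟩; exact (hπ B).1 hB
      · intro hC
        obtain ⟨B, rfl⟩ := hpre C hC
        exact ⟨B, (hπ B).2 hC, rfl⟩
  · intro π _
    rw [Finset.prod_map]
    unfold partCum
    refine Finset.prod_congr rfl (fun V _ => ?_)
    have hs : (V.map e).sort (· ≤ ·) = (V.sort (· ≤ ·)).map e :=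
      (Finset.map_sort _ _ _ _ (fun i _ j _ => by simp [he])).symm
    have : blockCum κ a (V.map e) = listCum κ ((V.sort (· ≤ ·)).map (fun j => a (e j))) := by
      unfold blockCum
      rw [hs, List.map_map]; rfl
    change _ = blockCum κ a (V.map e)
    rw [this, listCum_eq κ _ (V.sort (· ≤ ·)).length (by simp)]
    congr 1
    funext j
    simp [List.getElem?_eq_getElem j.2]

theorem word_cons (a : ℕ → A) (m r : ℕ) (h : m < r) : word a m r = a m :: word a (m + 1) r := by
  unfold word
  rw [show r - m = (r - (m + 1)) + 1 by omega, List.range'_succ]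
  rfl

theorem word_concat (a : ℕ → A) (l m : ℕ) (h : l ≤ m) : word a l (m + 1) = word a l m ++ [a m] := by
  unfold word
  rw [show m + 1 - l = (m - l) + 1 by omega, List.range'_concat]
  simp
  congr 1; omega

theorem gapSum_ncSum (φ : A →ₗ[ℂ] ℂ) (h1 : φ 1 = 1)
    (κ : ∀ n, MultilinearMap ℂ (fun _ : Fin n => A) ℂ)
    (hκ : MomentCumulant φ κ) (a : ℕ → A) (r : ℕ) : ∀ (d l m : ℕ) (L : List A → ℂ),
    m + d = r → l ≤ m →
    ∑ V ∈ (Finset.Ico m r).powerset, L ((V.sort (· ≤ ·)).map a) *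
      ncSum (blockCum κ a) (Finset.Ico l r \ V) V =
    gapSum φ L (word a l m).prod (word a m r) := by
  intro d
  induction d with
  | zero =>
    intro l m L hm hl
    have : m = r := by omega
    subst this
    obtain ⟨n, rfl⟩ := Nat.exists_eq_add_of_le hl
    simp only [Finset.Ico_self, Finset.powerset_empty, Finset.sum_singleton, Finset.sdiff_empty]
    rw [ncSum_Ico φ h1 κ hκ]
    simp [word, gapSum]
  | succ d ih =>
    intro l m L hm hl
    have hins : Finset.Ico m r = insert m (Finset.Ico (m + 1) r) := by
      ext x; simp only [Finset.mem_Ico, Finset.mem_insert]; omega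
    rw [hins, Finset.sum_powerset_insert (by simp), ih l (m + 1) L (by omega) (by omega),
      word_cons a m r (by omega), gapSum, word_concat a l m hl, List.prod_append, add_comm]
    congr 1
    · have := ih (m + 1) (m + 1) (fun q => L (a m :: q)) (by omega) le_rfl
      have hw1 : (word a (m + 1) (m + 1)).prod = 1 := by simp [word]
      rw [hw1] at this
      rw [← this, Finset.mul_sum]
      refine Finset.sum_congr rfl (fun V hV => ?_)
      rw [Finset.mem_powerset] at hV
      have hVm : ∀ v ∈ V, m < v ∧ v < r := fun v hv => by
        have := hV hv
        rw [Finset.mem_Ico] at this; omega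
      have hmV : m ∉ V := fun h => by have := hVm m h; omega
      rw [Finset.sort_insert (· ≤ ·) (fun b hb => (hVm b hb).1.le) hmV, List.map_cons,
        ncSum_split _ _ _ m (by simp) (by simp)]
      have e1 : (Finset.Ico l r \ insert m V).filter (· < m) = Finset.Ico l m := by
        ext x
        simp only [Finset.mem_filter, Finset.mem_sdiff, Finset.mem_Ico, Finset.mem_insert]
        constructor
        · omega
        · intro hx
          refine ⟨⟨by omega, ?_⟩, by omega⟩
          rintro (h | h)
          · omega
          · have := hVm x h; omega
      have e2 : (Finset.Ico l r \ insert m V).filter (m < ·) = Finset.Ico (m + 1) r \ V := by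
        ext x
        simp only [Finset.mem_filter, Finset.mem_sdiff, Finset.mem_Ico, Finset.mem_insert]
        constructor
        · rintro ⟨⟨h1, h2⟩, h3⟩
          exact ⟨by omega, fun h => h2 (Or.inr h)⟩
        · rintro ⟨h1, h2⟩
          refine ⟨⟨by omega, ?_⟩, by omega⟩
          rintro (h | h)
          · omega
          · exact h2 h
      rw [e1, e2, ncSum_congr_cut _ (Finset.Ico l m) _ ∅, ncSum_congr_cut _ _ (insert m V) V]
      · obtain ⟨n, rfl⟩ := Nat.exists_eq_add_of_le hl
        rw [ncSum_Ico φ h1 κ hκ]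
        ring
      · intro c hc d hd v hcv hvd
        simp only [Finset.mem_sdiff, Finset.mem_Ico] at hc
        rw [Finset.mem_insert]
        constructor
        · rintro (h | h)
          · omega
          · exact h
        · exact Or.inr
      · intro c hc d hd v hcv hvd
        simp only [Finset.mem_Ico] at hd
        simp only [Finset.notMem_empty, iff_false, Finset.mem_insert]
        rintro (h | h)
        · omega
        · have := hVm v h; omega
    · simp

theorem recurrence_left (φ : A →ₗ[ℂ] ℂ) (h1 : φ 1 = 1)
    (κ : ∀ n, MultilinearMap ℂ (fun _ : Fin n => A) ℂ)
    (hκ : MomentCumulant φ κ) (x : A) (w : List A) :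
    φ (x * w.prod) = gapSum φ (fun q => listCum κ (x :: q)) 1 w := by
  set n := w.length with hn
  let a : ℕ → A := fun i => (x :: w).getD i 0
  have hw : word a 1 (n + 1) = w := by
    apply List.ext_getElem
    · simp [word, hn]
    · intro i h1 h2; simp [word, a, add_comm 1 i, h2]
  have hx : a 0 = x := by simp [a]
  have e0 := ncSum_Ico φ h1 κ hκ a 0 (n + 1)
  rw [zero_add, word_cons a 0 (n + 1) (by omega), zero_add, hw, hx, List.prod_cons] at e0
  rw [← e0, ncSum_block _ _ 0 (by simp) (Or.inl (by simp))]
  have e1 : (Finset.Ico 0 (n + 1)).erase 0 = Finset.Ico 1 (n + 1) := by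
    ext y; simp only [Finset.mem_erase, Finset.mem_Ico]; omega
  rw [e1]
  have := gapSum_ncSum φ h1 κ hκ a (n + 1) n 1 1 (fun q => listCum κ (x :: q)) (by omega) le_rfl
  rw [hw] at this
  rw [show (word a 1 1).prod = 1 by simp [word]] at this
  rw [← this]
  refine Finset.sum_congr rfl (fun V hV => ?_)
  rw [Finset.mem_powerset] at hV
  congr 1
  unfold blockCum
  rw [Finset.sort_insert (· ≤ ·) (fun b hb => Nat.zero_le b)
    (fun h => by simpa using hV h), List.map_cons, hx]

theorem sort_insert_max (V : Finset ℕ) (n : ℕ) (h : ∀ v ∈ V, v < n) :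
    (insert n V).sort (· ≤ ·) = V.sort (· ≤ ·) ++ [n] := by
  have hn : n ∉ V := fun hh => lt_irrefl _ (h n hh)
  refine List.Perm.eq_of_pairwise' (r := (· ≤ ·)) (Finset.pairwise_sort _ _) ?_ ?_
  · rw [List.pairwise_append]
    refine ⟨Finset.pairwise_sort _ _, by simp, ?_⟩
    intro v hv y hy
    simp at hv hy
    subst hy
    exact (h v hv).le
  · rw [List.perm_ext_iff_of_nodup (Finset.sort_nodup _ _)]
    · intro y; simp [or_comm]
    · rw [List.nodup_append]
      refine ⟨Finset.sort_nodup _ _, by simp, ?_⟩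
      intro v hv y hy
      simp at hv hy
      subst hy
      exact (h v hv).ne

theorem recurrence_right (φ : A →ₗ[ℂ] ℂ) (h1 : φ 1 = 1)
    (κ : ∀ n, MultilinearMap ℂ (fun _ : Fin n => A) ℂ)
    (hκ : MomentCumulant φ κ) (x : A) (w : List A) :
    φ (w.prod * x) = gapSum φ (fun q => listCum κ (q ++ [x])) 1 w := by
  set n := w.length with hn
  let a : ℕ → A := fun i => (w ++ [x]).getD i 0
  have hw : word a 0 n = w := by
    apply List.ext_getElem
    · simp [word, hn]
    · intro i h1 h2; simp [word, a, List.getElem?_append_left h2, h2]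
  have hx : a n = x := by simp [a, hn]
  have e0 := ncSum_Ico φ h1 κ hκ a 0 (n + 1)
  rw [zero_add, word_concat a 0 n (by omega), hw, hx, List.prod_append, List.prod_singleton] at e0
  rw [← e0, ncSum_block _ _ n (by simp) (Or.inr (by intro y hy; simp at hy; omega))]
  have e1 : (Finset.Ico 0 (n + 1)).erase n = Finset.Ico 0 n := by
    ext y; simp only [Finset.mem_erase, Finset.mem_Ico]; omega
  rw [e1]
  have := gapSum_ncSum φ h1 κ hκ a n n 0 0 (fun q => listCum κ (q ++ [x])) (by omega) le_rfl
  rw [hw] at this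
  rw [show (word a 0 0).prod = 1 by simp [word]] at this
  rw [← this]
  refine Finset.sum_congr rfl (fun V hV => ?_)
  rw [Finset.mem_powerset] at hV
  congr 1
  unfold blockCum
  rw [sort_insert_max V n (fun v hv => (Finset.mem_Ico.1 (hV hv)).2), List.map_append,
    List.map_singleton, hx]

end Bridge


/-- **Equivalence of the two definitions of free independence.**
Let `(A, φ)` be a non-commutative probability space with free cumulants `κ`
(the multilinear functionals satisfying the moment–cumulant relation), and let
`(Alg i)` be unital subalgebras of `A`. Then vanishing of mixed free cumulants
(freeness in the cumulant sense) is equivalent to freeness in the moment sense. -/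
theorem freeIndepCumulant_iff_freeIndepMoment
    {A : Type*} [Ring A] [Algebra ℂ A] {ι : Type*}
    (φ : A →ₗ[ℂ] ℂ) (hφ1 : φ 1 = 1)
    (κ : ∀ n, MultilinearMap ℂ (fun _ : Fin n => A) ℂ)
    (hκ : MomentCumulant φ κ)
    (Alg : ι → Subalgebra ℂ A) :
    FreeIndepCumulant (fun i => (Alg i : Set A)) κ ↔
      FreeIndepMoment φ (fun i => (Alg i : Set A)) := by
  have hL := recurrence_left φ hφ1 κ hκ
  have hR := recurrence_right φ hφ1 κ hκ
  constructor
  · intro hC k hk a idx ha h0 hne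
    have hlist : List.ofFn a = (List.ofFn (fun j => (idx j, a j))).map Prod.snd := by
      rw [List.map_ofFn]; rfl
    rw [hlist]
    refine freeCum_to_moment φ hφ1 (listCum κ) hL (fun i => (Alg i : Set A)) ?_ _ _ rfl ?_ ?_ ?_ ?_
    · intro l hS hmix
      have e : l.map Prod.snd = List.ofFn (fun j : Fin l.length => (l.get j).2) := by
        apply List.ext_getElem
        · simp
        · intro i h1 h2; simp
      rw [e, listCum_ofFn]
      obtain ⟨d, hd, d', hd', hdd⟩ := hmix
      obtain ⟨j, rfl⟩ := List.get_of_mem hd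
      obtain ⟨j', rfl⟩ := List.get_of_mem hd'
      refine hC l.length ?_ _ (fun j => (l.get j).1) (fun j => hS _ (List.get_mem l j)) ⟨j, j', hdd⟩
      have hjj : (j : ℕ) ≠ j' := fun h => hdd (by rw [Fin.ext h])
      have := j.2
      have := j'.2
      omega
    · intro h
      have := congrArg List.length h
      simp at this
      omega
    · intro e he
      obtain ⟨j, rfl⟩ := (List.mem_ofFn' _ _).1 he
      exact ha j
    · intro e he
      obtain ⟨j, rfl⟩ := (List.mem_ofFn' _ _).1 he
      exact h0 j
    · rw [List.isChain_iff_getElem]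
      intro i hi
      simp only [List.getElem_ofFn]
      exact hne _ _ rfl
  · intro hM n hn a idx ha hmix
    rw [← listCum_ofFn κ n a]
    have hlist : List.ofFn a = (List.ofFn (fun j => (idx j, a j))).map Prod.snd := by
      rw [List.map_ofFn]; rfl
    rw [hlist]
    refine freeMoment_to_cum φ hφ1 κ hL hR Alg ?_ _ _ rfl ?_ ?_
    · intro l hne hS h0 hch
      have e : l.map Prod.snd = List.ofFn (fun j : Fin l.length => (l.get j).2) := by
        apply List.ext_getElem
        · simp
        · intro i h1 h2; simp
      rw [e]
      refine hM l.length (List.length_pos_of_ne_nil hne) _ (fun j => (l.get j).1)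
        (fun j => hS _ (List.get_mem l j)) (fun j => h0 _ (List.get_mem l j)) ?_
      rintro ⟨j, hj⟩ ⟨j', hj'⟩ hjj
      simp only at hjj
      subst hjj
      exact (List.isChain_iff_getElem.1 hch) j hj'
    · intro e he
      obtain ⟨j, rfl⟩ := (List.mem_ofFn' _ _).1 he
      exact ha j
    · obtain ⟨j, j', hjj⟩ := hmix
      exact ⟨(idx j, a j), (List.mem_ofFn' _ _).2 ⟨j, rfl⟩, (idx j', a j'),
        (List.mem_ofFn' _ _).2 ⟨j', rfl⟩, hjj⟩
end

section
/- Let (A, φ) be a *-probability space with free cumulants (κ_n), and let (A_i)_{i∈I} be unital *-subalgebras of A that are freely independent in the cumulant sense. Let a = a_1 ⋯ a_k and b = b_1 ⋯ b_k, where for all 1 ≤ u ≤ k, a_u, b_u ∈ A_{i_u} with φ(a_u) = 0, φ(b_u) = 0, and i_u ≠ i_{u+1} for 1 ≤ u ≤ k−1. Then κ_2(a*, b) = ∏_{u=1}^{k} κ_2(a_u*, b_u). -/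
open scoped BigOperators ComplexOrder

theorem partCum_block_single {A : Type*} [Ring A] [Algebra ℂ A]
    (κ : ∀ n, MultilinearMap ℂ (fun _ : Fin n => A) ℂ) {n : ℕ} (a : Fin n → A) (p : Fin n)
    (l : List (Fin n)) (hl : l = [p]) :
    κ l.length (fun j => a (l.get j)) = κ 1 ![a p] := by
  subst hl
  show κ 1 _ = _
  congr 1
  ext j
  fin_cases j
  rfl

theorem partCum_block_pair {A : Type*} [Ring A] [Algebra ℂ A]
    (κ : ∀ n, MultilinearMap ℂ (fun _ : Fin n => A) ℂ) {n : ℕ} (a : Fin n → A) (p q : Fin n)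
    (l : List (Fin n)) (hl : l = [p, q]) :
    κ l.length (fun j => a (l.get j)) = κ 2 ![a p, a q] := by
  subst hl
  show κ 2 _ = _
  congr 1
  ext j
  fin_cases j <;> rfl

theorem kappa_one_eq {A : Type*} [Ring A] [Algebra ℂ A] (φ : A →ₗ[ℂ] ℂ)
    (κ : ∀ n, MultilinearMap ℂ (fun _ : Fin n => A) ℂ)
    (hκ : MomentCumulant φ κ) (x : A) : κ 1 ![x] = φ x := by
  classical
  have h := hκ 1 one_pos ![x]
  have hp : ∀ π : Finpartition (Finset.univ : Finset (Fin 1)), π.parts = {{0}} := by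
    intro π
    have h0 : ∀ B ∈ π.parts, B = {0} := by
      intro B hB
      obtain ⟨z, hz⟩ := π.nonempty_of_mem_parts hB
      ext y
      rw [Subsingleton.elim y z, Subsingleton.elim z 0] at *
      simpa using hz
    ext B
    rw [Finset.mem_singleton]
    refine ⟨h0 B, ?_⟩
    rintro rfl
    obtain ⟨C, hC, -⟩ := π.exists_mem (Finset.mem_univ (0 : Fin 1))
    rwa [h0 C hC] at hC
  have hs : (Finset.univ.filter
      (fun π : Finpartition (Finset.univ : Finset (Fin 1)) => IsNonCrossing π)) = {⊥} := by
    ext π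
    simp only [Finset.mem_filter, Finset.mem_univ, true_and, Finset.mem_singleton]
    constructor
    · intro _
      apply Finpartition.ext
      rw [hp, hp]
    · intro _ p q r s hpq
      omega
  have h2 : partCum κ (⊥ : Finpartition (Finset.univ : Finset (Fin 1))) ![x] = κ 1 ![x] := by
    rw [partCum, hp, Finset.prod_singleton]
    exact partCum_block_single κ ![x] 0 _ (by simp)
  have h3 : φ (List.ofFn ![x]).prod = κ 1 ![x] := by
    rw [h, ← h2]
    convert Finset.sum_singleton _ _ using 2
    convert hs using 2
  rw [← h3]; simp

theorem kappa_two_eq {A : Type*} [Ring A] [Algebra ℂ A] (φ : A →ₗ[ℂ] ℂ)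
    (κ : ∀ n, MultilinearMap ℂ (fun _ : Fin n => A) ℂ)
    (hκ : MomentCumulant φ κ) (x y : A) : φ (x * y) = κ 2 ![x, y] + φ x * φ y := by
  classical
  have h := hκ 2 two_pos ![x, y]
  let T : Finpartition (Finset.univ : Finset (Fin 2)) :=
    Finpartition.indiscrete (a := Finset.univ) (by decide)
  have hT : T.parts = {Finset.univ} := rfl
  have hB : (⊥ : Finpartition (Finset.univ : Finset (Fin 2))).parts = {{0}, {1}} := by
    decide
  have hne : T ≠ ⊥ := by
    intro e
    have := congrArg (fun π => π.parts) e
    simp only [hT, hB] at this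
    revert this; decide
  have hp : ∀ π : Finpartition (Finset.univ : Finset (Fin 2)), π = T ∨ π = ⊥ := by
    intro π
    have hs : ∀ S : Finset (Fin 2), S = ∅ ∨ S = {0} ∨ S = {1} ∨ S = Finset.univ := by decide
    have hb := π.bot_notMem
    obtain ⟨C, hC, h0⟩ := π.exists_mem (Finset.mem_univ (0 : Fin 2))
    obtain ⟨D, hD, h1⟩ := π.exists_mem (Finset.mem_univ (1 : Fin 2))
    have hd := fun E (hE : E ∈ π.parts) (h : (0 : Fin 2) ∈ E) => π.eq_of_mem_parts hC hE h0 h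
    have hd' := fun E (hE : E ∈ π.parts) (h : (1 : Fin 2) ∈ E) => π.eq_of_mem_parts hD hE h1 h
    have key : π.parts = {C, D} := by
      ext E
      simp only [Finset.mem_insert, Finset.mem_singleton]
      constructor
      · intro hE
        obtain ⟨z, hz⟩ := π.nonempty_of_mem_parts hE
        fin_cases z
        · exact Or.inl (hd E hE hz).symm
        · exact Or.inr (hd' E hE hz).symm
      · rintro (rfl | rfl) <;> assumption
    by_cases hc : (1 : Fin 2) ∈ C
    · left
      have e := hd' C hC hc
      apply Finpartition.ext
      rw [key, hT, e]
      have : C = Finset.univ := by clear * - h0 hc; revert C; decide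
      simp [this]
    · right
      apply Finpartition.ext
      have hz : (0 : Fin 2) ∉ D := fun h => hc (by rw [hd D hD h]; exact h1)
      rw [key, hB]
      have e1 : C = {0} := by clear * - h0 hc; revert C; decide
      have e2 : D = {1} := by clear * - h1 hz; revert D; decide
      rw [e1, e2]
  have hs : (Finset.univ.filter
      (fun π : Finpartition (Finset.univ : Finset (Fin 2)) => IsNonCrossing π)) = {T, ⊥} := by
    ext π
    simp only [Finset.mem_filter, Finset.mem_univ, true_and, Finset.mem_insert,
      Finset.mem_singleton]
    refine ⟨fun _ => hp π, fun _ p q r s _ _ _ => by omega⟩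
  have h1 : partCum κ T ![x, y] = κ 2 ![x, y] := by
    rw [partCum, hT, Finset.prod_singleton]
    exact partCum_block_pair κ ![x, y] 0 1 _ (by
      rw [Fin.sort_univ]; rfl)
  have h2 : partCum κ ⊥ ![x, y] = φ x * φ y := by
    rw [partCum, hB, Finset.prod_pair (by decide),
      partCum_block_single κ ![x, y] 0 _ (by simp),
      partCum_block_single κ ![x, y] 1 _ (by simp), kappa_one_eq φ κ hκ, kappa_one_eq φ κ hκ]
    rfl
  have h3 : φ (List.ofFn ![x, y]).prod = κ 2 ![x, y] + φ x * φ y := by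
    rw [h, ← h1, ← h2, ← Finset.sum_pair (f := fun π => partCum κ π ![x, y]) hne, ← hs]
  rw [← h3]; simp

/-- A non-crossing partition has a singleton block or a block with two adjacent elements. -/
theorem nonCrossing_adj {n : ℕ} (hn : 0 < n)
    (π : Finpartition (Finset.univ : Finset (Fin n))) (hπ : IsNonCrossing π) :
    (∃ p, {p} ∈ π.parts) ∨
      ∃ V ∈ π.parts, ∃ p ∈ V, ∃ q ∈ V, (p : ℕ) + 1 = q := by
  by_contra! hcon
  obtain ⟨hsing, hadj⟩ := hcon
  have hother : ∀ B ∈ π.parts, ∀ p ∈ B, ∃ s ∈ B, s ≠ p := by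
    intro B hB p hp
    by_contra! h
    apply hsing p
    have : B = {p} := by
      ext z
      rw [Finset.mem_singleton]
      exact ⟨h z, fun e => e ▸ hp⟩
    rwa [this] at hB
  have main : ∀ d : ℕ, ∀ B ∈ π.parts, ∀ p ∈ B, ∀ q ∈ B, p < q → (q : ℕ) - p = d → False := by
    intro d
    induction d using Nat.strong_induction_on with
    | _ d ih =>
      intro B hB p hp q hq hpq hd
      have h1 : (p : ℕ) + 1 ≠ q := hadj B hB p hp q hq
      have hlt : (p : ℕ) < q := hpq
      let m : Fin n := ⟨p + 1, by omega⟩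
      have hm : (m : ℕ) = p + 1 := rfl
      have hmB : m ∉ B := fun h => hadj B hB p hp m h hm.symm
      obtain ⟨C, hC, hmC⟩ := π.exists_mem (Finset.mem_univ m)
      obtain ⟨s, hs, hsm⟩ := hother C hC m hmC
      have hsm' : (s : ℕ) ≠ m := fun h => hsm (Fin.ext h)
      have hCB : C ≠ B := fun h => hmB (h ▸ hmC)
      have hsB : s ∉ B := fun h => hCB (π.eq_of_mem_parts hC hB hs h)
      have hsp : (s : ℕ) ≠ p := fun h => hsB (Fin.ext h ▸ hp)
      have hsq : (s : ℕ) ≠ q := fun h => hsB (Fin.ext h ▸ hq)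
      rcases lt_or_gt_of_ne hsp with h | h
      · exact hCB (hπ s p m q h (Fin.lt_def.2 (by omega)) (Fin.lt_def.2 (by omega))
          C hC B hB hs hmC hp hq)
      · rcases lt_or_gt_of_ne hsq with h' | h'
        · exact ih (s - m) (by omega) C hC m hmC s hs (Fin.lt_def.2 (by omega)) rfl
        · exact hCB (hπ p m q s (Fin.lt_def.2 (by omega)) (Fin.lt_def.2 (by omega)) h'
            B hB C hC hp hq hmC hs).symm
  obtain ⟨B, hB, hz⟩ := π.exists_mem (Finset.mem_univ (⟨0, hn⟩ : Fin n))
  obtain ⟨s, hs, hs0⟩ := hother B hB _ hz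
  refine main _ B hB _ hz s hs (Fin.lt_def.2 ?_) rfl
  have : (s : ℕ) ≠ 0 := fun h => hs0 (Fin.ext h)
  show 0 < (s : ℕ)
  omega

theorem free_moment_zero {A : Type*} [Ring A] [Algebra ℂ A] {ι : Type*} (φ : A →ₗ[ℂ] ℂ)
    (κ : ∀ n, MultilinearMap ℂ (fun _ : Fin n => A) ℂ)
    (hκ : MomentCumulant φ κ) (S : ι → Set A) (hfree : FreeIndepCumulant S κ)
    (n : ℕ) (hn : 0 < n) (c : Fin n → A) (i : Fin n → ι)
    (hmem : ∀ u, c u ∈ S (i u)) (hcent : ∀ u, φ (c u) = 0)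
    (halt : ∀ u u' : Fin n, (u : ℕ) + 1 = (u' : ℕ) → i u ≠ i u') :
    φ (List.ofFn c).prod = 0 := by
  classical
  rw [hκ n hn c]
  apply Finset.sum_eq_zero
  intro π hπ
  simp only [Finset.mem_filter] at hπ
  rcases nonCrossing_adj hn π hπ.2 with ⟨p, hp⟩ | ⟨V, hV, p, hp, q, hq, hpq⟩
  · apply Finset.prod_eq_zero hp
    rw [partCum_block_single κ c p _ (by simp), kappa_one_eq φ κ hκ, hcent]
  · apply Finset.prod_eq_zero hV
    have hp' : p ∈ V.sort (· ≤ ·) := (Finset.mem_sort _).2 hp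
    have hq' : q ∈ V.sort (· ≤ ·) := (Finset.mem_sort _).2 hq
    obtain ⟨j, hj⟩ := List.get_of_mem hp'
    obtain ⟨j', hj'⟩ := List.get_of_mem hq'
    have hi := halt p q hpq
    refine hfree _ ?_ _ (fun j => i ((V.sort (· ≤ ·)).get j)) (fun j => hmem _)
      ⟨j, j', by rw [hj, hj']; exact hi⟩
    have : j ≠ j' := by
      rintro rfl
      rw [hj] at hj'
      exact hi (by rw [hj'])
    have h1 := j.2
    have h2 := j'.2
    have h3 : (j : ℕ) ≠ j' := fun h => this (Fin.ext h)
    omega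

theorem free_moment_zero_list {A : Type*} [Ring A] [Algebra ℂ A] {ι : Type*} (φ : A →ₗ[ℂ] ℂ)
    (κ : ∀ n, MultilinearMap ℂ (fun _ : Fin n => A) ℂ)
    (hκ : MomentCumulant φ κ) (S : ι → Set A) (hfree : FreeIndepCumulant S κ)
    (L : List (ι × A)) (hL : L ≠ []) (hmem : ∀ x ∈ L, x.2 ∈ S x.1 ∧ φ x.2 = 0)
    (halt : L.IsChain (fun x y => x.1 ≠ y.1)) :
    φ (L.map Prod.snd).prod = 0 := by
  have h := free_moment_zero φ κ hκ S hfree L.length (List.length_pos_iff.2 hL)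
    (fun j => (L.get j).2) (fun j => (L.get j).1) (fun u => (hmem _ (List.get_mem L u)).1)
    (fun u => (hmem _ (List.get_mem L u)).2) (by
      rintro ⟨u, hu⟩ ⟨u', hu'⟩ h
      simp only at h
      subst h
      exact List.isChain_iff_getElem.1 halt u hu')
  have e : List.ofFn (fun j => (L.get j).2) = L.map Prod.snd := by
    apply List.ext_getElem <;> simp
  rwa [e] at h

theorem phi_star_zero {A : Type*} [Ring A] [Algebra ℂ A] [StarRing A] [StarModule ℂ A]
    (φ : A →ₗ[ℂ] ℂ) (hφ1 : φ 1 = 1)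
    (hpos : ∀ x : A, 0 ≤ φ (star x * x)) (x : A) (hx : φ x = 0) : φ (star x) = 0 := by
  have him : ∀ x : A, (φ (star x * x)).im = 0 := fun x => ((Complex.le_def.1 (hpos x)).2).symm
  have h0 := him x
  have h1 := him (1 + x)
  have h2 := him (1 + Complex.I • x)
  have e1 : star (1 + x) * (1 + x) = 1 + x + star x + star x * x := by
    rw [star_add, star_one]; noncomm_ring
  have e2 : star (1 + Complex.I • x) * (1 + Complex.I • x)
      = 1 + Complex.I • x - Complex.I • star x + star x * x := by
    rw [star_add, star_one, star_smul]
    simp only [add_mul, mul_add, one_mul, mul_one, smul_mul_smul_comm]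
    simp
    abel
  rw [e1] at h1
  rw [e2] at h2
  simp [hx, hφ1, h0] at h1 h2
  exact Complex.ext h2 h1

theorem word_pair_moment {A : Type*} [Ring A] [Algebra ℂ A] [StarRing A] [StarModule ℂ A]
    {ι : Type*} (φ : A →ₗ[ℂ] ℂ) (hφ1 : φ 1 = 1)
    (hpos : ∀ x : A, 0 ≤ φ (star x * x))
    (κ : ∀ n, MultilinearMap ℂ (fun _ : Fin n => A) ℂ)
    (hκ : MomentCumulant φ κ) (Alg : ι → StarSubalgebra ℂ A)
    (hfree : FreeIndepCumulant (fun i' => (Alg i' : Set A)) κ)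
    (T : List (ι × A × A))
    (hmem : ∀ x ∈ T, (x.2.1 ∈ Alg x.1 ∧ φ x.2.1 = 0) ∧ (x.2.2 ∈ Alg x.1 ∧ φ x.2.2 = 0))
    (halt : T.IsChain (fun x y => x.1 ≠ y.1)) :
    φ (star (T.map (fun x => x.2.1)).prod * (T.map (fun x => x.2.2)).prod) =
      (T.map (fun x => φ (star x.2.1 * x.2.2))).prod := by
  induction T with
  | nil => simp [hφ1]
  | cons t T ih =>
    have ih' := ih (fun x hx => hmem x (List.mem_cons_of_mem _ hx)) halt.tail
    have ht := hmem t List.mem_cons_self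
    simp only [List.map_cons, List.prod_cons]
    rw [← ih']
    set P := (T.map (fun x => x.2.1)).prod with hP
    set Q := (T.map (fun x => x.2.2)).prod with hQ
    set lam := φ (star t.2.1 * t.2.2) with hlam
    set c : A := star t.2.1 * t.2.2 - lam • (1 : A) with hc
    have e : star (t.2.1 * P) * (t.2.2 * Q) = lam • (star P * Q) + star P * (c * Q) := by
      rw [star_mul, hc, sub_mul, mul_sub, smul_mul_assoc, one_mul, mul_smul_comm]
      simp only [mul_assoc]
      abel
    have hz : φ (star P * (c * Q)) = 0 := by
      let L : List (ι × A) := (T.map (fun x => (x.1, star x.2.1))).reverse ++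
        ((t.1, c) :: T.map (fun x => (x.1, x.2.2)))
      have hstar : ∀ U : List (ι × A × A), star (U.map (fun x => x.2.1)).prod =
          ((U.map (fun x => (x.1, star x.2.1))).reverse.map Prod.snd).prod := by
        intro U
        induction U with
        | nil => simp
        | cons u U ihU => simp [ihU]
      have hprod : (L.map Prod.snd).prod = star P * (c * Q) := by
        simp only [L, List.map_append, List.prod_append, hP, hQ, hstar, List.map_cons,
          List.prod_cons, List.map_map]
        rfl
      rw [← hprod]
      apply free_moment_zero_list φ κ hκ _ hfree L (by simp [L])
      · intro x hx
        simp only [L, List.mem_append, List.mem_reverse, List.mem_map, List.mem_cons] at hx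
        rcases hx with ⟨y, hy, rfl⟩ | rfl | ⟨y, hy, rfl⟩
        · have := hmem y (List.mem_cons_of_mem _ hy)
          exact ⟨star_mem this.1.1, phi_star_zero φ hφ1 hpos _ this.1.2⟩
        · refine ⟨?_, ?_⟩
          · exact sub_mem (mul_mem (star_mem ht.1.1) ht.2.1)
              (SMulMemClass.smul_mem _ (one_mem _))
          · simp [hc, hφ1, hlam]
        · have := hmem y (List.mem_cons_of_mem _ hy)
          exact this.2
      · have h1 : (((t.1, c) :: T.map (fun x => (x.1, x.2.2))) : List (ι × A)).IsChain
            (fun x y => x.1 ≠ y.1) := by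
          have := List.isChain_cons.1 halt
          rw [List.isChain_cons]
          refine ⟨?_, ?_⟩
          · intro y hy
            simp only [List.head?_map, Option.mem_def, Option.map_eq_some_iff] at hy
            obtain ⟨z, hz, rfl⟩ := hy
            exact this.1 z hz
          · rw [List.isChain_map]
            exact this.2
        have h2 : (T.map (fun x => (x.1, star x.2.1))).reverse.IsChain
            (fun x y => x.1 ≠ y.1) := by
          rw [List.isChain_reverse, List.isChain_map]
          exact halt.tail.imp (fun _ _ h => h.symm)
        refine List.isChain_append.2 ⟨h2, h1, ?_⟩
        intro x hx y hy
        simp only [List.getLast?_reverse, List.head?_map, Option.mem_def,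
          Option.map_eq_some_iff, List.head?_cons, Option.some.injEq] at hx hy
        obtain ⟨z, hz, rfl⟩ := hx
        subst hy
        exact ((List.isChain_cons.1 halt).1 z hz).symm
    rw [e, map_add, hz, map_smul, add_zero, smul_eq_mul]

/-- **Product formula for `κ_2(a*, b)` for words of the same shape (Lemma 2, second part).**
Let `(A, φ)` be a `*`-probability space with free cumulants `κ`, and let `(Alg i)` be
unital `*`-subalgebras that are freely independent in the cumulant sense. Let
`a = a_1 ⋯ a_k` and `b = b_1 ⋯ b_k` with `a_u, b_u ∈ Alg (i u)`, all centered, and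
consecutive indices distinct. Then `κ_2(a*, b) = ∏_{u=1}^k κ_2(a_u*, b_u)`. -/
theorem kappa_two_star_word_same_shape
    {A : Type*} [Ring A] [Algebra ℂ A] [StarRing A] [StarModule ℂ A] {ι : Type*}
    (φ : A →ₗ[ℂ] ℂ) (hφ1 : φ 1 = 1)
    (hpos : ∀ x : A, 0 ≤ φ (star x * x))
    (κ : ∀ n, MultilinearMap ℂ (fun _ : Fin n => A) ℂ)
    (hκ : MomentCumulant φ κ)
    (Alg : ι → StarSubalgebra ℂ A)
    (hfree : FreeIndepCumulant (fun i' => (Alg i' : Set A)) κ)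
    (k : ℕ) (hk : 0 < k)
    (a b : Fin k → A) (i : Fin k → ι)
    (hamem : ∀ u, a u ∈ Alg (i u)) (hacent : ∀ u, φ (a u) = 0)
    (hbmem : ∀ u, b u ∈ Alg (i u)) (hbcent : ∀ u, φ (b u) = 0)
    (halt : ∀ u u' : Fin k, (u : ℕ) + 1 = (u' : ℕ) → i u ≠ i u') :
    κ 2 ![star (List.ofFn a).prod, (List.ofFn b).prod] =
      ∏ u : Fin k, κ 2 ![star (a u), b u] := by
  have hb0 : φ (List.ofFn b).prod = 0 :=
    free_moment_zero φ κ hκ _ hfree k hk b i hbmem hbcent halt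
  have h2 : ∀ x y : A, φ y = 0 → κ 2 ![x, y] = φ (x * y) := by
    intro x y hy
    rw [kappa_two_eq φ κ hκ, hy, mul_zero, add_zero]
  rw [h2 _ _ hb0]
  have h := word_pair_moment φ hφ1 hpos κ hκ Alg hfree
    (List.ofFn (fun u => (i u, a u, b u))) (by
      intro x hx
      obtain ⟨u, rfl⟩ := (List.mem_ofFn' _ _).1 hx
      exact ⟨⟨hamem u, hacent u⟩, hbmem u, hbcent u⟩) (by
      rw [List.isChain_iff_getElem]
      intro j hj
      simp only [List.getElem_ofFn]
      exact halt _ _ rfl)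
  simp only [List.map_ofFn, Function.comp_def] at h
  rw [h, List.prod_ofFn]
  exact Finset.prod_congr rfl (fun u _ => (h2 _ _ (hbcent u)).symm)
end

section
/- Let (A, φ) be a *-probability space with free cumulants (κ_n), and let (A_i)_{i∈I} be unital *-subalgebras of A that are freely independent in the cumulant sense. Let a = a_1 ⋯ a_k, where for all 1 ≤ u ≤ k, a_u ∈ A_{i_u} with φ(a_u) = 0, and i_u ≠ i_{u+1} for 1 ≤ u ≤ k−1. Then κ_2(a*, a) = ∏_{u=1}^{k} κ_2(a_u*, a_u), and this quantity is a nonnegative real number. -/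
open scoped BigOperators ComplexOrder

/-- A non-crossing partition has a singleton block or a block with two consecutive elements. -/
theorem aux_nc {n : ℕ} (hn : 0 < n) (π : Finpartition (Finset.univ : Finset (Fin n)))
    (h : IsNonCrossing π) :
    (∃ u : Fin n, {u} ∈ π.parts) ∨
      ∃ B ∈ π.parts, ∃ u v : Fin n, (u : ℕ) + 1 = v ∧ u ∈ B ∧ v ∈ B := by
  classical
  by_contra hcon
  push Not at hcon
  obtain ⟨h1, h2⟩ := hcon
  have key : ∀ d : ℕ, ∀ B ∈ π.parts, ∀ p q : Fin n, p ∈ B → q ∈ B → (p : ℕ) < q →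
      (q : ℕ) - p ≤ d → False := by
    intro d
    induction d with
    | zero => intro B _ p q _ _ hlt hd; omega
    | succ d ih =>
      intro B hB p q hp hq hlt hd
      by_cases hpq : (p : ℕ) + 1 = q
      · exact h2 B hB p q hpq hp hq
      have hpn : (p : ℕ) + 1 < n := by have := q.2; omega
      obtain ⟨C, hC, hrC⟩ := π.exists_mem (Finset.mem_univ (⟨p + 1, hpn⟩ : Fin n))
      have hne : C ≠ {⟨p + 1, hpn⟩} := fun e => h1 _ (e ▸ hC)
      have : ∃ x ∈ C, x ≠ ⟨p + 1, hpn⟩ := by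
        by_contra hx
        push Not at hx
        exact hne (Finset.eq_singleton_iff_unique_mem.2 ⟨hrC, hx⟩)
      obtain ⟨x, hxC, hx⟩ := this
      have hx' : (x : ℕ) ≠ p + 1 := fun e => hx (Fin.ext e)
      have hCB : C ≠ B := by
        rintro rfl
        exact h2 C hC p ⟨p + 1, hpn⟩ rfl hp hrC
      have hxp : x ≠ p := by
        rintro rfl
        exact hCB (π.eq_of_mem_parts hC hB hxC hp)
      have hxq : x ≠ q := by
        rintro rfl
        exact hCB (π.eq_of_mem_parts hC hB hxC hq)
      have hxp' : (x : ℕ) ≠ p := fun e => hxp (Fin.ext e)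
      have hxq' : (x : ℕ) ≠ q := fun e => hxq (Fin.ext e)
      by_cases c1 : (x : ℕ) < p
      · exact hCB (h x p ⟨p + 1, hpn⟩ q c1 (Fin.lt_def.2 (by simp))
          (Fin.lt_def.2 (by simp; omega)) C hC B hB hxC hrC hp hq)
      by_cases c2 : (q : ℕ) < x
      · exact hCB (h p ⟨p + 1, hpn⟩ q x (Fin.lt_def.2 (by simp))
          (Fin.lt_def.2 (by simp; omega)) c2 B hB C hC hp hq hrC hxC).symm
      exact ih C hC ⟨p + 1, hpn⟩ x hrC hxC (by simp; omega) (by simp; omega)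
  obtain ⟨C, hC, hrC⟩ := π.exists_mem (Finset.mem_univ (⟨0, hn⟩ : Fin n))
  have hne : C ≠ {⟨0, hn⟩} := fun e => h1 _ (e ▸ hC)
  have : ∃ x ∈ C, x ≠ ⟨0, hn⟩ := by
    by_contra hx
    push Not at hx
    exact hne (Finset.eq_singleton_iff_unique_mem.2 ⟨hrC, hx⟩)
  obtain ⟨x, hxC, hx⟩ := this
  have hx' : (x : ℕ) ≠ 0 := fun e => hx (Fin.ext e)
  exact key _ C hC ⟨0, hn⟩ x hrC hxC (by simp; omega) le_rfl

section aux
variable {A : Type*} [Ring A] [Algebra ℂ A] {φ : A →ₗ[ℂ] ℂ}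
  {κ : ∀ n, MultilinearMap ℂ (fun _ : Fin n => A) ℂ}

theorem aux_kappa_one (hκ : MomentCumulant φ κ) (f : Fin 1 → A) : κ 1 f = φ (f 0) := by
  classical
  have h := hκ 1 one_pos f
  have hp : ∀ π : Finpartition (Finset.univ : Finset (Fin 1)), π.parts = {{0}} := by
    intro π
    have hm : ∀ B ∈ π.parts, B = {0} := by
      intro B hB
      obtain ⟨x, hx⟩ := π.nonempty_of_mem_parts hB
      ext y
      simp [Subsingleton.elim y x, hx, Subsingleton.elim x 0]
      simpa [Subsingleton.elim x 0] using hx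
    obtain ⟨C, hC, _⟩ := π.exists_mem (Finset.mem_univ (0 : Fin 1))
    exact Finset.eq_singleton_iff_unique_mem.2 ⟨hm C hC ▸ hC, hm⟩
  have hs : Finset.univ.filter
      (fun π : Finpartition (Finset.univ : Finset (Fin 1)) => IsNonCrossing π) = {⊤} := by
    ext π
    simp only [Finset.mem_filter, Finset.mem_univ, true_and, Finset.mem_singleton]
    constructor
    · intro _
      exact Finpartition.ext ((hp π).trans (hp ⊤).symm)
    · intro _ p q r s hpq
      exact absurd hpq (by simp [Subsingleton.elim p q])
  rw [hs, Finset.sum_singleton, partCum, hp, Finset.prod_singleton] at h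
  have e : (({0} : Finset (Fin 1)).sort (· ≤ ·)) = [0] := Finset.sort_singleton _ _
  have h3 := congrArg (fun l : List (Fin 1) => κ l.length (fun j => f (l.get j))) e
  have h4 : φ (List.ofFn f).prod = φ (f 0) := by simp
  rw [← h4, h]
  refine Eq.trans ?_ h3.symm
  show κ 1 f = κ 1 _
  congr 1
  funext j
  simp [Subsingleton.elim j 0]

theorem aux_single {n : ℕ} (hκ : MomentCumulant φ κ) (f : Fin n → A)
    (π : Finpartition (Finset.univ : Finset (Fin n))) (u : Fin n) (hu : {u} ∈ π.parts)
    (h0 : φ (f u) = 0) : partCum κ π f = 0 := by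
  refine Finset.prod_eq_zero hu ?_
  have e : (({u} : Finset (Fin n)).sort (· ≤ ·)) = [u] := Finset.sort_singleton _ _
  refine (congrArg (fun l : List (Fin n) => κ l.length (fun j => f (l.get j))) e).trans ?_
  exact (aux_kappa_one hκ _).trans h0

theorem aux_kappa_two (hκ : MomentCumulant φ κ) (x y : A) (hy : φ y = 0) :
    κ 2 ![x, y] = φ (x * y) := by
  classical
  have h := hκ 2 two_pos ![x, y]
  have hp : ∀ π : Finpartition (Finset.univ : Finset (Fin 2)),
      {1} ∉ π.parts → π.parts = {Finset.univ} := by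
    intro π hπ
    obtain ⟨C, hC, h1⟩ := π.exists_mem (Finset.mem_univ (1 : Fin 2))
    have h0 : (0 : Fin 2) ∈ C := by
      by_contra h0
      apply hπ
      convert hC
      ext z
      fin_cases z <;> simp [h0, h1]
    have hCu : C = Finset.univ := by
      ext z
      fin_cases z <;> simp [h0, h1]
    subst hCu
    refine Finset.eq_singleton_iff_unique_mem.2 ⟨hC, fun B hB => ?_⟩
    obtain ⟨z, hz⟩ := π.nonempty_of_mem_parts hB
    exact π.eq_of_mem_parts hB hC hz (Finset.mem_univ z)
  have ht : (⊤ : Finpartition (Finset.univ : Finset (Fin 2))).parts = {Finset.univ} :=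
    by
      apply hp
      intro hm
      have := Finpartition.parts_top_subset _ hm
      exact absurd (Finset.mem_singleton.1 this) (by decide)
  rw [Finset.sum_eq_single (⊤ : Finpartition (Finset.univ : Finset (Fin 2)))] at h
  · rw [partCum, ht, Finset.prod_singleton] at h
    have e : ((Finset.univ : Finset (Fin 2)).sort (· ≤ ·)) = [0, 1] := by
      rw [Fin.sort_univ]; rfl
    have h3 := congrArg (fun l : List (Fin 2) =>
      κ l.length (fun j => (![x, y] : Fin 2 → A) (l.get j))) e
    have h4 : φ (List.ofFn ![x, y]).prod = φ (x * y) := by simp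
    rw [← h4, h]
    refine Eq.trans ?_ h3.symm
    show κ 2 _ = κ 2 _
    congr 1
    funext j
    fin_cases j <;> rfl
  · intro π _ hne
    by_cases hm : {1} ∈ π.parts
    · exact aux_single hκ _ π 1 hm (by simpa using hy)
    · exact absurd (Finpartition.ext ((hp π hm).trans ht.symm)) hne
  · intro hn
    exfalso
    apply hn
    simp only [Finset.mem_filter, Finset.mem_univ, true_and]
    intro p q r s h1 h2 h3
    simp only [Fin.lt_def] at h1 h2 h3
    omega

theorem aux_alt {ι : Type*} (hκ : MomentCumulant φ κ) {S : ι → Set A}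
    (hfree : FreeIndepCumulant S κ) {n : ℕ} (hn : 0 < n) (f : Fin n → A) (i : Fin n → ι)
    (hm : ∀ u, f u ∈ S (i u)) (hc : ∀ u, φ (f u) = 0)
    (halt : ∀ u v : Fin n, (u : ℕ) + 1 = v → i u ≠ i v) :
    φ (List.ofFn f).prod = 0 := by
  classical
  rw [hκ n hn f]
  refine Finset.sum_eq_zero fun π hπ => ?_
  rcases aux_nc hn π (Finset.mem_filter.1 hπ).2 with ⟨u, hu⟩ | ⟨B, hB, u, v, huv, hu, hv⟩
  · exact aux_single hκ f π u hu (hc u)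
  · refine Finset.prod_eq_zero hB ?_
    have hne : u ≠ v := by rintro rfl; omega
    refine hfree _ ?_ _ (fun j => i ((B.sort (· ≤ ·)).get j)) (fun j => hm _) ?_
    · rw [Finset.length_sort]
      exact Finset.one_lt_card.2 ⟨u, hu, v, hv, hne⟩
    · obtain ⟨j, hj⟩ := List.get_of_mem ((Finset.mem_sort (· ≤ ·)).2 hu)
      obtain ⟨j', hj'⟩ := List.get_of_mem ((Finset.mem_sort (· ≤ ·)).2 hv)
      refine ⟨j, j', ?_⟩
      simp only [hj, hj']
      exact halt u v huv

theorem aux_list {ι : Type*} (hκ : MomentCumulant φ κ) {S : ι → Set A}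
    (hfree : FreeIndepCumulant S κ) (L : List (ι × A)) (hL : L ≠ [])
    (hm : ∀ p ∈ L, p.2 ∈ S p.1 ∧ φ p.2 = 0)
    (halt : L.IsChain (fun p q => p.1 ≠ q.1)) :
    φ (L.map Prod.snd).prod = 0 := by
  have h := aux_alt hκ hfree (List.length_pos_iff.2 hL) (fun j => (L.get j).2)
    (fun j => (L.get j).1) (fun u => (hm _ (L.get_mem u)).1) (fun u => (hm _ (L.get_mem u)).2)
    (by
      intro u v huv
      have := List.isChain_iff_getElem.1 halt u (by omega)
      simpa [huv] using this)
  have e : List.ofFn (fun j => (L.get j).2) = L.map Prod.snd := by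
    rw [← List.ofFn_get L]; simp [List.map_ofFn, Function.comp_def]
  rwa [e] at h

end aux

theorem aux_star_prod {A : Type*} [Ring A] [StarRing A] (l : List A) :
    star l.prod = (l.map star).reverse.prod := by
  induction l with
  | nil => simp
  | cons x t ih => simp [ih]

theorem aux_star {A : Type*} [Ring A] [Algebra ℂ A] [StarRing A] [StarModule ℂ A]
    (φ : A →ₗ[ℂ] ℂ) (hpos : ∀ x : A, 0 ≤ φ (star x * x)) (x : A) (hx : φ x = 0) :
    φ (star x) = 0 := by
  have h0 := hpos x
  have h1' := hpos 1
  have h1 := hpos (1 + x)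
  have h2 := hpos (1 + Complex.I • x)
  simp only [star_add, star_one, star_smul, add_mul, mul_add, one_mul, mul_one, map_add, hx,
    smul_mul_assoc, mul_smul_comm, map_smul, smul_eq_mul] at h1 h2 h1'
  rw [Complex.le_def] at h0 h1 h2 h1'
  apply Complex.ext
  · have := h2.2
    have a1 := h0.2
    have a2 := h1'.2
    simp at this a1 a2
    simp
    linarith
  · have := h1.2
    have a1 := h0.2
    have a2 := h1'.2
    simp at this a1 a2
    simp
    linarith

theorem aux_main {A : Type*} [Ring A] [Algebra ℂ A] [StarRing A] [StarModule ℂ A] {ι : Type*}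
    (φ : A →ₗ[ℂ] ℂ) (hφ1 : φ 1 = 1) (hpos : ∀ x : A, 0 ≤ φ (star x * x))
    (κ : ∀ n, MultilinearMap ℂ (fun _ : Fin n => A) ℂ) (hκ : MomentCumulant φ κ)
    (Alg : ι → StarSubalgebra ℂ A)
    (hfree : FreeIndepCumulant (fun i' => (Alg i' : Set A)) κ)
    (L : List (ι × A)) (hm : ∀ p ∈ L, p.2 ∈ Alg p.1 ∧ φ p.2 = 0)
    (halt : L.IsChain (fun p q => p.1 ≠ q.1)) :
    φ (star (L.map Prod.snd).prod * (L.map Prod.snd).prod) =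
      (L.map (fun p => φ (star p.2 * p.2))).prod := by
  induction L with
  | nil => simp [hφ1]
  | cons p T ih =>
    have hmT : ∀ q ∈ T, q.2 ∈ Alg q.1 ∧ φ q.2 = 0 := fun q hq => hm q (List.mem_cons_of_mem _ hq)
    have hp := hm p List.mem_cons_self
    have ih' := ih hmT halt.tail
    set t := (T.map Prod.snd).prod with ht
    set c := φ (star p.2 * p.2) with hc
    set b : A := star p.2 * p.2 - algebraMap ℂ A c with hb
    have hbm : b ∈ Alg p.1 :=
      sub_mem (mul_mem (star_mem hp.1) hp.1) ((Alg p.1).algebraMap_mem c)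
    have hb0 : φ b = 0 := by
      rw [hb, map_sub, Algebra.algebraMap_eq_smul_one, map_smul, hφ1, ← hc]; simp
    set R : List (ι × A) := (T.map (fun q => (q.1, star q.2))).reverse with hR
    have hstar : star t = (R.map Prod.snd).prod := by
      rw [ht, hR, aux_star_prod]
      simp [List.map_reverse, Function.comp_def]
    have hzero : φ (star t * (b * t)) = 0 := by
      have := aux_list hκ hfree (R ++ (p.1, b) :: T) (by simp) ?_ ?_
      · rw [List.map_append, List.prod_append, List.map_cons, List.prod_cons, ← hstar, ← ht] at this
        exact this
      · intro q hq
        rcases List.mem_append.1 hq with hq | hq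
        · simp only [hR, List.mem_reverse, List.mem_map] at hq
          obtain ⟨r, hr, rfl⟩ := hq
          exact ⟨star_mem (hmT r hr).1, aux_star φ hpos _ (hmT r hr).2⟩
        · rcases List.mem_cons.1 hq with rfl | hq
          · exact ⟨hbm, hb0⟩
          · exact hmT q hq
      · have hI : ((p.1, b) :: T).IsChain (fun p q => p.1 ≠ q.1) := by
          cases T with
          | nil => simp
          | cons q T' =>
            rw [List.isChain_cons_cons] at halt ⊢
            exact halt
        have hJ : (R ++ [(p.1, b)]).IsChain (fun p q => p.1 ≠ q.1) := by
          rw [← List.isChain_reverse]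
          simp only [hR, List.reverse_append, List.reverse_reverse, List.reverse_singleton,
            List.singleton_append]
          have e : (p.1, b) :: T.map (fun q => (q.1, star q.2)) =
            ((p.1, star b) :: T).map (fun q => (q.1, star q.2)) := by simp
          rw [e, List.isChain_map]
          cases T with
          | nil => simp
          | cons q T' =>
            rw [List.isChain_cons_cons] at halt ⊢
            exact ⟨halt.1.symm, halt.2.imp fun _ _ h => h.symm⟩
        exact List.isChain_split.2 ⟨hJ, hI⟩
    rw [List.map_cons, List.prod_cons, List.map_cons, List.prod_cons, ← ht, ← ih', ← hc]
    have e : star (p.2 * t) * (p.2 * t) = star t * (b * t) + c • (star t * t) := by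
      rw [hb, star_mul, Algebra.algebraMap_eq_smul_one]
      simp only [sub_mul, mul_sub, smul_mul_assoc, mul_smul_comm, one_mul, mul_assoc]
      abel
    rw [e, map_add, hzero, map_smul, zero_add, smul_eq_mul]

/-- **Nonnegativity of the free "variance" of an alternating centered word (Lemma 2,
last part).** Let `(A, φ)` be a `*`-probability space with free cumulants `κ`, and let
`(Alg i)` be unital `*`-subalgebras that are freely independent in the cumulant sense.
Let `a = a_1 ⋯ a_k` with `a_u ∈ Alg (i u)`, all centered, and consecutive indices
distinct. Then `κ_2(a*, a) = ∏_{u=1}^k κ_2(a_u*, a_u)`, and this quantity is a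
nonnegative real number. -/
theorem kappa_two_star_word_self
    {A : Type*} [Ring A] [Algebra ℂ A] [StarRing A] [StarModule ℂ A] {ι : Type*}
    (φ : A →ₗ[ℂ] ℂ) (hφ1 : φ 1 = 1)
    (hpos : ∀ x : A, 0 ≤ φ (star x * x))
    (κ : ∀ n, MultilinearMap ℂ (fun _ : Fin n => A) ℂ)
    (hκ : MomentCumulant φ κ)
    (Alg : ι → StarSubalgebra ℂ A)
    (hfree : FreeIndepCumulant (fun i' => (Alg i' : Set A)) κ)
    (k : ℕ) (hk : 0 < k)
    (a : Fin k → A) (i : Fin k → ι)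
    (hamem : ∀ u, a u ∈ Alg (i u)) (hacent : ∀ u, φ (a u) = 0)
    (halt : ∀ u u' : Fin k, (u : ℕ) + 1 = (u' : ℕ) → i u ≠ i u') :
    (κ 2 ![star (List.ofFn a).prod, (List.ofFn a).prod] =
      ∏ u : Fin k, κ 2 ![star (a u), a u]) ∧
    0 ≤ κ 2 ![star (List.ofFn a).prod, (List.ofFn a).prod] := by
  have hL := aux_main φ hφ1 hpos κ hκ Alg hfree (List.ofFn fun u => (i u, a u))
    (by
      intro p hp
      obtain ⟨u, rfl⟩ := (List.mem_ofFn' _ _).1 hp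
      exact ⟨hamem u, hacent u⟩)
    (by
      rw [List.isChain_iff_getElem]
      intro j hj
      simp only [List.getElem_ofFn]
      exact halt _ _ rfl)
  have h0 : φ (List.ofFn a).prod = 0 := aux_alt hκ hfree hk a i hamem hacent halt
  have e : (List.ofFn fun u => (i u, a u)).map Prod.snd = List.ofFn a := by
    simp [List.map_ofFn, Function.comp_def]
  rw [e, List.map_ofFn, List.prod_ofFn] at hL
  rw [aux_kappa_two hκ _ _ h0]
  refine ⟨?_, hpos _⟩
  rw [hL]
  exact Finset.prod_congr rfl fun u _ => (aux_kappa_two hκ _ _ (hacent u)).symm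
end
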